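/- Let β and b satisfy hypotheses (i)–(ii), let T > 0, let u ∈ L^∞((0,T)×ℝ^d) be measurable, and set Ψ(t,x) := Φ(u(t,x)) and B(t,x) := b(x,u(t,x)), where Φ(r) = β(r)/r for r ≠ 0 and Φ(0) = β'(0) (so that Ψ and B are bounded and Ψ ≥ γ0 > 0 a.e.). Then for each v0 ∈ L¹(ℝ^d) ∩ L^∞(ℝ^d), the linearized Fokker–Planck equation ∂_t v − Δ(Ψ v) + div(B v) = 0 with initial datum v0 has at most one distributional solution v such that t ↦ v(t) is continuous from [0,T] to L¹(ℝ^d) and v ∈ L^∞((0,T)×ℝ^d); i.e., if v₁ and v₂ are two such solutions then v₁(t,x) = v₂(t,x) for every t ∈ [0,T] and a.e. x ∈ ℝ^d. -/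

import Mathlib

open MeasureTheory Filter Set

noncomputable section

/-- The Laplacian of a function on `ℝ^d` (sum of second partial derivatives). -/
noncomputable def lap {d : ℕ} (f : EuclideanSpace ℝ (Fin d) → ℝ)
    (x : EuclideanSpace ℝ (Fin d)) : ℝ :=
  ∑ i, fderiv ℝ (fun y => fderiv ℝ f y (EuclideanSpace.single i 1)) x
    (EuclideanSpace.single i 1)

/-- Hypothesis (i): `β(0) = 0`, `β ∈ C¹(ℝ)`, and strong monotonicity with constant `γ0 > 0`. -/
def HypBeta (β : ℝ → ℝ) (γ0 : ℝ) : Prop :=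
  β 0 = 0 ∧ ContDiff ℝ 1 β ∧ 0 < γ0 ∧
    ∀ r1 r2 : ℝ, γ0 * (r1 - r2) ^ 2 ≤ (β r1 - β r2) * (r1 - r2)

/-- Hypothesis (ii) on the drift `b : ℝ^d × ℝ → ℝ^d`: `b` is `C¹`, bounded, `b(x,0) = 0`,
`∂_r b` is bounded on `ℝ^d × [-M,M]` for every `M > 0`, and
`δ(r) = sup_x |∇_x b(x,r)|` is a bounded continuous function of `r`. -/
def HypB {d : ℕ} (b : EuclideanSpace ℝ (Fin d) → ℝ → EuclideanSpace ℝ (Fin d)) : Prop :=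
  ContDiff ℝ 1 (fun p : EuclideanSpace ℝ (Fin d) × ℝ => b p.1 p.2) ∧
  (∃ C, ∀ x r, ‖b x r‖ ≤ C) ∧
  (∀ x, b x 0 = 0) ∧
  (∀ M > (0 : ℝ), ∃ C, ∀ x r, |r| ≤ M → ‖deriv (fun s => b x s) r‖ ≤ C) ∧
  (∃ δb : ℝ → ℝ, Continuous δb ∧ (∃ C, ∀ r, δb r ≤ C) ∧
    ∀ r, IsLUB (range fun x => ‖fderiv ℝ (fun y => b y r) x‖) (δb r))

/-- `v` is a distributional solution on `[0,T]` of the linear Fokker–Planck equation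
`∂_t v − Δ(Ψ v) + div(B v) = 0`, `v(0) = v0`: each `v(t)` is in `L¹`,
`t ↦ v(t,x)dx` is narrowly continuous on `[0,T]`, the weak formulation holds against all
test functions `φ ∈ C_c^∞((0,T) × ℝ^d)`, and the initial condition holds a.e. -/
def IsLinDistSol {d : ℕ} (T : ℝ) (Ψ : ℝ → EuclideanSpace ℝ (Fin d) → ℝ)
    (B : ℝ → EuclideanSpace ℝ (Fin d) → EuclideanSpace ℝ (Fin d))
    (v0 : EuclideanSpace ℝ (Fin d) → ℝ) (v : ℝ → EuclideanSpace ℝ (Fin d) → ℝ) : Prop :=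
  (∀ t ∈ Icc 0 T, Integrable (v t)) ∧
  (∀ ψ : EuclideanSpace ℝ (Fin d) → ℝ, Continuous ψ → (∃ C, ∀ x, |ψ x| ≤ C) →
    ∀ s ∈ Icc (0 : ℝ) T,
      Tendsto (fun t => ∫ x, v t x * ψ x) (nhdsWithin s (Icc 0 T))
        (nhds (∫ x, v s x * ψ x))) ∧
  (∀ φ : ℝ → EuclideanSpace ℝ (Fin d) → ℝ,
    ContDiff ℝ (⊤ : ℕ∞) (Function.uncurry φ) →
    HasCompactSupport (Function.uncurry φ) →
    (∀ p ∈ tsupport (Function.uncurry φ), 0 < p.1 ∧ p.1 < T) →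
    (∫ t in Ioo (0 : ℝ) T, ∫ x,
      (v t x * deriv (fun s => φ s x) t
        + Ψ t x * v t x * lap (φ t) x
        + v t x * fderiv ℝ (φ t) x (B t x))) = 0) ∧
  (∀ᵐ x, v 0 x = v0 x)


open MeasureTheory Filter Set
noncomputable section fpsec1
open scoped FourierTransform SchwartzMap ComplexInnerProductSpace

section four
variable {E : Type*} [NormedAddCommGroup E] [InnerProductSpace ℝ E] [FiniteDimensional ℝ E]
  [MeasurableSpace E] [BorelSpace E]

lemma fp_flip (f : E → ℂ) (h1 : Integrable f) (g : 𝓢(E, ℂ)) :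
    ∫ x, (𝓕 g : 𝓢(E, ℂ)) x * f x = ∫ x, g x * 𝓕 f x := by
  have := VectorFourier.integral_fourierIntegral_smul_eq_flip (L := innerₗ E)
    (μ := (volume : Measure E)) (ν := (volume : Measure E))
    Real.continuous_fourierChar (by exact continuous_inner) g.integrable h1
  simp only [smul_eq_mul, flip_innerₗ] at this
  convert! this using 1

lemma fp_plancherel_ae (f : E → ℂ) (h1 : Integrable f) (h2 : MemLp f 2) :
    (𝓕 (h2.toLp f) : Lp (α := E) ℂ 2) =ᵐ[volume] 𝓕 f := by
  apply ae_eq_of_integral_contDiff_smul_eq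
  · exact (Lp.memLp _).locallyIntegrable (by norm_num)
  · apply Continuous.locallyIntegrable
    exact VectorFourier.fourierIntegral_continuous Real.continuous_fourierChar
      (by exact continuous_inner) h1
  intro g hg hgc
  have hgc' : HasCompactSupport (fun x => (g x : ℂ)) := hgc.comp_left (g := fun r : ℝ => (r : ℂ)) (by simp)
  let G : 𝓢(E, ℂ) := hgc'.toSchwartzMap (Complex.ofRealCLM.contDiff.comp hg)
  have hG : ∀ x, G x = (g x : ℂ) := fun x => rfl
  have e := congrArg (fun D : 𝓢'(E, ℂ) => D G) (Lp.fourier_toTemperedDistribution_eq (h2.toLp f))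
  simp only [TemperedDistribution.fourier_apply, Lp.toTemperedDistribution_apply] at e
  have e3 : ∫ x, (𝓕 G : 𝓢(E, ℂ)) x • (h2.toLp f) x = ∫ x, (𝓕 G : 𝓢(E, ℂ)) x * f x := by
    apply integral_congr_ae
    filter_upwards [h2.coeFn_toLp] with x hx
    rw [hx, smul_eq_mul]
  rw [e3, fp_flip f h1] at e
  simp only [hG] at e
  simpa using e.symm

lemma fp_memLp (f : E → ℂ) (h1 : Integrable f) (h2 : MemLp f 2) : MemLp (𝓕 f) 2 :=
  (memLp_congr_ae (fp_plancherel_ae f h1 h2)).1 (Lp.memLp _)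

lemma fp_inner (f g : E → ℂ) (hf1 : Integrable f) (hf2 : MemLp f 2) (hg1 : Integrable g)
    (hg2 : MemLp g 2) : ∫ k, inner ℂ (𝓕 f k) (𝓕 g k) = ∫ x, inner ℂ (f x) (g x) := by
  have := Lp.inner_fourier_eq (hf2.toLp f) (hg2.toLp g)
  rw [L2.inner_def, L2.inner_def] at this
  convert this using 1
  · apply integral_congr_ae
    filter_upwards [fp_plancherel_ae f hf1 hf2, fp_plancherel_ae g hg1 hg2] with x h1 h2
    rw [h1, h2]
  · apply integral_congr_ae
    filter_upwards [hf2.coeFn_toLp, hg2.coeFn_toLp] with x h1 h2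
    rw [h1, h2]

lemma fp_norm (f : E → ℂ) (hf1 : Integrable f) (hf2 : MemLp f 2) :
    ∫ k, ‖𝓕 f k‖ ^ 2 = ∫ x, ‖f x‖ ^ 2 := by
  have := fp_inner f f hf1 hf2 hf1 hf2
  simp only [inner_self_eq_norm_sq_to_K] at this
  have h : ((∫ k, ‖𝓕 f k‖ ^ 2 : ℝ) : ℂ) = ((∫ x, ‖f x‖ ^ 2 : ℝ) : ℂ) := by
    rw [← integral_complex_ofReal, ← integral_complex_ofReal]
    simpa using this
  exact_mod_cast h

lemma fp_inj (f : E → ℂ) (hf1 : Integrable f) (h0 : ∀ᵐ k, 𝓕 f k = 0) : ∀ᵐ x, f x = 0 := by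
  apply ae_eq_zero_of_integral_contDiff_smul_eq_zero hf1.locallyIntegrable
  intro g hg hgc
  have hgc' : HasCompactSupport (fun x => (g x : ℂ)) := hgc.comp_left (g := fun r : ℝ => (r : ℂ)) (by simp)
  let G : 𝓢(E, ℂ) := hgc'.toSchwartzMap (Complex.ofRealCLM.contDiff.comp hg)
  have hG : ∀ x, G x = (g x : ℂ) := fun x => rfl
  have e := fp_flip f hf1 (𝓕⁻ G : 𝓢(E, ℂ))
  rw [FourierTransform.fourier_fourierInv_eq] at e
  simp only [hG] at e
  simp only [Complex.real_smul]
  rw [e]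
  apply integral_eq_zero_of_ae
  filter_upwards [h0] with x hx
  simp [hx]
end four
end fpsec1


open MeasureTheory Filter Set
noncomputable section fpsec2

lemma fp_ibp {a c : ℝ → ℝ} {t : ℝ} (ha : IntervalIntegrable a volume 0 t)
    (hc : IntervalIntegrable c volume 0 t) :
    ∫ s in (0:ℝ)..t, (a s * (∫ r in (0:ℝ)..s, c r) + (∫ r in (0:ℝ)..s, a r) * c s)
      = (∫ s in (0:ℝ)..t, a s) * (∫ s in (0:ℝ)..t, c s) := by
  have hA := ha.absolutelyContinuousOnInterval_intervalIntegral (c := 0) left_mem_uIcc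
  have hC := hc.absolutelyContinuousOnInterval_intervalIntegral (c := 0) left_mem_uIcc
  have := hA.integral_deriv_mul_eq_sub hC
  simp only [intervalIntegral.integral_same, mul_zero, sub_zero] at this
  rw [← this]
  apply intervalIntegral.integral_congr_ae
  filter_upwards [ha.ae_hasDerivAt_integral, hc.ae_hasDerivAt_integral] with x h1 h2 hx
  have hx' := uIoc_subset_uIcc hx
  rw [(h1 hx' 0 left_mem_uIcc).deriv, (h2 hx' 0 left_mem_uIcc).deriv]

lemma fp_compact_Ioo {T : ℝ} (hT : 0 < T) {K : Set ℝ} (hK : IsCompact K) (h : K ⊆ Ioo 0 T) :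
    ∃ a b, 0 < a ∧ a ≤ b ∧ b < T ∧ K ⊆ Icc a b := by
  have hK' : IsCompact (insert (T/2) K) := hK.insert _
  have hne : (insert (T/2) K).Nonempty := insert_nonempty _ _
  have hs : insert (T/2) K ⊆ Ioo 0 T := insert_subset ⟨by linarith, by linarith⟩ h
  refine ⟨sInf (insert (T/2) K), sSup (insert (T/2) K), (hs (hK'.sInf_mem hne)).1, ?_,
    (hs (hK'.sSup_mem hne)).2, ?_⟩
  · exact csInf_le hK'.bddBelow (hK'.sSup_mem hne)
  · intro x hx
    exact ⟨csInf_le hK'.bddBelow (mem_insert_of_mem _ hx), le_csSup hK'.bddAbove (mem_insert_of_mem _ hx)⟩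

lemma fp_primitive {T : ℝ} (hT : 0 < T) (θ : ℝ → ℝ) (hθ : ContDiff ℝ (⊤ : ℕ∞) θ)
    (hθc : HasCompactSupport θ) (hθs : tsupport θ ⊆ Ioo 0 T) (h0 : ∫ s in (0:ℝ)..T, θ s = 0) :
    ContDiff ℝ (⊤ : ℕ∞) (fun t => ∫ s in (0:ℝ)..t, θ s) ∧
    HasCompactSupport (fun t => ∫ s in (0:ℝ)..t, θ s) ∧
    tsupport (fun t => ∫ s in (0:ℝ)..t, θ s) ⊆ Ioo 0 T ∧
    deriv (fun t => ∫ s in (0:ℝ)..t, θ s) = θ := by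
  have hd : ∀ t, HasDerivAt (fun t => ∫ s in (0:ℝ)..t, θ s) (θ t) t := fun t =>
    intervalIntegral.integral_hasDerivAt_right (hθ.continuous.intervalIntegrable _ _)
      hθ.continuous.aestronglyMeasurable.stronglyMeasurableAtFilter hθ.continuous.continuousAt
  have hderiv : deriv (fun t => ∫ s in (0:ℝ)..t, θ s) = θ := funext fun t => (hd t).deriv
  obtain ⟨a, b, ha, hab, hb, hK⟩ := fp_compact_Ioo hT hθc hθs
  have hz : ∀ x, x ∉ Icc a b → θ x = 0 := fun x hx =>
    image_eq_zero_of_notMem_tsupport (fun h => hx (hK h))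
  have hsupp : tsupport (fun t => ∫ s in (0:ℝ)..t, θ s) ⊆ Icc a b := by
    apply closure_minimal _ isClosed_Icc
    intro t ht
    by_contra hc
    apply ht
    simp only [mem_Icc, not_and_or, not_le] at hc
    rcases hc with hc | hc
    · apply intervalIntegral.integral_zero_ae
      refine Eventually.of_forall fun x hx => hz x fun h => ?_
      rcases le_total 0 t with h' | h'
      · rw [uIoc_of_le h'] at hx; linarith [hx.2, h.1]
      · rw [uIoc_of_ge h'] at hx; linarith [hx.2, h.1]
    · have h1 : (∫ s in (0:ℝ)..t, θ s) + ∫ s in t..T, θ s = ∫ s in (0:ℝ)..T, θ s :=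
        intervalIntegral.integral_add_adjacent_intervals
          (hθ.continuous.intervalIntegrable _ _) (hθ.continuous.intervalIntegrable _ _)
      have h2 : ∫ s in t..T, θ s = 0 := by
        apply intervalIntegral.integral_zero_ae
        refine Eventually.of_forall fun x hx => hz x fun h => ?_
        rcases le_total t T with h' | h'
        · rw [uIoc_of_le h'] at hx; linarith [hx.1, h.2]
        · rw [uIoc_of_ge h'] at hx; linarith [hx.1, h.2]
      show (∫ s in (0:ℝ)..t, θ s) = 0
      linarith
  refine ⟨?_, ?_, ?_, hderiv⟩
  · exact contDiff_infty_iff_deriv.2 ⟨fun t => (hd t).differentiableAt, by rw [hderiv]; exact hθ⟩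
  · exact isCompact_Icc.of_isClosed_subset (isClosed_tsupport _) hsupp
  · exact hsupp.trans (fun x hx => ⟨by linarith [hx.1], by linarith [hx.2]⟩)

lemma fp_time {T : ℝ} (hT : 0 < T) (h g : ℝ → ℝ) (hh : ContinuousOn h (Icc 0 T))
    (hg : IntegrableOn g (Ioo 0 T))
    (H : ∀ η : ℝ → ℝ, ContDiff ℝ (⊤ : ℕ∞) η → HasCompactSupport η → tsupport η ⊆ Ioo 0 T →
      ∫ t in Ioo 0 T, (h t * deriv η t + g t * η t) = 0) :
    ∀ t ∈ Icc 0 T, h t - h 0 = ∫ s in (0:ℝ)..t, g s := by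
  have hgi : IntervalIntegrable g volume 0 T := by
    rw [intervalIntegrable_iff_integrableOn_Ioo_of_le hT.le]; exact hg
  have hhi : IntervalIntegrable h volume 0 T := hh.intervalIntegrable_of_Icc hT.le
  set G : ℝ → ℝ := fun t => ∫ s in (0:ℝ)..t, g s with hG
  have hGc : ContinuousOn G (Icc 0 T) := by
    have := hgi.absolutelyContinuousOnInterval_intervalIntegral (c := 0) left_mem_uIcc
    simpa [uIcc_of_le hT.le] using this.continuousOn
  have hGi : IntervalIntegrable G volume 0 T := hGc.intervalIntegrable_of_Icc hT.le
  have key : ∀ θ : ℝ → ℝ, ContDiff ℝ (⊤ : ℕ∞) θ → HasCompactSupport θ → tsupport θ ⊆ Ioo 0 T →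
      ∫ s in (0:ℝ)..T, θ s = 0 → ∫ s in (0:ℝ)..T, (h s - G s) * θ s = 0 := by
    intro θ hθ hθc hθs h0
    obtain ⟨p1, p2, p3, p4⟩ := fp_primitive hT θ hθ hθc hθs h0
    have e1 := H _ p1 p2 p3
    rw [p4, ← integral_Ioc_eq_integral_Ioo, ← intervalIntegral.integral_of_le hT.le] at e1
    have e2 := fp_ibp hgi (hθ.continuous.intervalIntegrable 0 T)
    rw [h0, mul_zero] at e2
    have cθ := hθ.continuous.continuousOn (s := uIcc 0 T)
    rw [intervalIntegral.integral_add (hhi.mul_continuousOn cθ) (hgi.mul_continuousOn p1.continuous.continuousOn)] at e1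
    rw [intervalIntegral.integral_add (hgi.mul_continuousOn p1.continuous.continuousOn) (hGi.mul_continuousOn cθ)] at e2
    simp only [sub_mul]
    rw [intervalIntegral.integral_sub (hhi.mul_continuousOn cθ) (hGi.mul_continuousOn cθ)]
    linarith
  -- a fixed bump
  let f0 : ContDiffBump (T/2 : ℝ) := ⟨T/8, T/4, by linarith, by linarith⟩
  have hf0c : ContDiff ℝ (⊤ : ℕ∞) (f0.normed volume) := f0.contDiff_normed
  have hf0s : tsupport (f0.normed volume) ⊆ Ioo 0 T := by
    rw [f0.tsupport_normed_eq, Real.closedBall_eq_Icc]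
    intro x hx
    have h1 := hx.1; have h2 := hx.2
    change T/2 - T/4 ≤ x at h1; change x ≤ T/2 + T/4 at h2
    exact ⟨by linarith, by linarith⟩
  have toint : ∀ F : ℝ → ℝ, tsupport F ⊆ Ioo 0 T → ∫ x, F x = ∫ x in (0:ℝ)..T, F x := by
    intro F hF
    rw [intervalIntegral.integral_of_le hT.le]
    symm
    apply setIntegral_eq_integral_of_forall_compl_eq_zero
    intro x hx
    apply image_eq_zero_of_notMem_tsupport
    exact fun h' => hx (Ioo_subset_Ioc_self (hF h'))
  have hf01 : ∫ s in (0:ℝ)..T, f0.normed volume s = 1 := by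
    rw [← toint _ hf0s]; exact f0.integral_normed
  set ρ := f0.normed volume
  set c := ∫ s in (0:ℝ)..T, (h s - G s) * ρ s with hc
  have hae : ∀ᵐ x, x ∈ Ioo 0 T → (h x - G x) - c = 0 := by
    apply isOpen_Ioo.ae_eq_zero_of_integral_contDiff_smul_eq_zero
    · exact (((hh.sub hGc).sub continuousOn_const).mono Ioo_subset_Icc_self).locallyIntegrableOn
        measurableSet_Ioo
    intro θ hθ hθc hθs
    have hk := key (fun s => θ s - (∫ s in (0:ℝ)..T, θ s) * ρ s) (hθ.sub (contDiff_const.mul hf0c))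
      (hθc.sub (f0.hasCompactSupport_normed.mul_left)) ?_ ?_
    · rw [toint]
      · have cθ := hθ.continuous.continuousOn (s := uIcc 0 T)
        have cρ := hf0c.continuous.continuousOn (s := uIcc 0 T)
        have I1 := ((hhi.sub hGi).mul_continuousOn cθ)
        have I2 := ((hhi.sub hGi).mul_continuousOn cρ)
        have : ∫ s in (0:ℝ)..T, (h s - G s) * (θ s - (∫ s in (0:ℝ)..T, θ s) * ρ s) =
          (∫ s in (0:ℝ)..T, (h s - G s) * θ s) - (∫ s in (0:ℝ)..T, θ s) * c := by
          rw [hc, ← intervalIntegral.integral_const_mul, ← intervalIntegral.integral_sub I1 (I2.const_mul _)]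
          congr 1; ext s; ring
        rw [this] at hk
        simp only [smul_eq_mul, mul_sub]
        rw [intervalIntegral.integral_sub, intervalIntegral.integral_mul_const]
        · refine Eq.trans ?_ hk; congr 1; congr 1; ext s; ring
        · refine I1.congr ?_
          exact fun s _ => by ring
        · exact (hθ.continuous.intervalIntegrable _ _).mul_const _
      · refine (closure_mono ?_).trans hθs
        intro x hx hx0; apply hx; show θ x • _ = 0; rw [hx0, zero_smul]
    · refine (tsupport_sub _ _).trans (union_subset hθs ?_)
      refine (closure_mono ?_).trans hf0s
      exact Function.support_mul_subset_right _ _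
    · rw [intervalIntegral.integral_sub (hθ.continuous.intervalIntegrable _ _)
        ((hf0c.continuous.intervalIntegrable _ _).const_mul _), intervalIntegral.integral_const_mul, hf01]
      ring
  have heq : EqOn (fun t => h t - G t) (fun _ => c) (Icc 0 T) := by
    refine Measure.eqOn_Icc_of_ae_eq (μ := volume) hT.ne ?_ (hh.sub hGc) continuousOn_const
    rw [← restrict_Ioo_eq_restrict_Icc]
    rw [EventuallyEq, ae_restrict_iff' measurableSet_Ioo]
    filter_upwards [hae] with x hx h'
    linarith [hx h']
  intro t ht
  have h1 := heq ht
  have h2 := heq (left_mem_Icc.2 hT.le)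
  simp only [hG, intervalIntegral.integral_same] at h1 h2
  linarith
end fpsec2


open MeasureTheory Filter Set
noncomputable section fpsec3

lemma fp_rep {E : Type*} [NormedAddCommGroup E] [InnerProductSpace ℝ E] [FiniteDimensional ℝ E]
    [MeasurableSpace E] [BorelSpace E] {T : ℝ} (hT : 0 < T) (w : ℝ → E → ℝ)
    (hint : ∀ t ∈ Icc 0 T, Integrable (w t))
    (hcont : ∀ ψ : E → ℝ, Continuous ψ → (∃ C, ∀ x, |ψ x| ≤ C) →
      ContinuousOn (fun t => ∫ x, w t x * ψ x) (Icc 0 T)) :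
    ∃ W : ℝ → E → ℝ, Measurable (Function.uncurry W) ∧ ∀ t ∈ Icc 0 T, W t =ᵐ[volume] w t := by
  let p : ℝ → ℝ := fun t => projIcc 0 T hT.le t
  have hp : ∀ t, p t ∈ Icc 0 T := fun t => (projIcc 0 T hT.le t).2
  have hpc : Continuous p := continuous_subtype_val.comp continuous_projIcc
  have hpe : ∀ t ∈ Icc 0 T, p t = t := fun t ht => by simp [p, projIcc_of_mem hT.le ht]
  let φ : ℕ → ContDiffBump (0 : E) := fun n =>
    ⟨1 / ((n : ℝ) + 1), 2 / ((n : ℝ) + 1), by positivity, by gcongr; norm_num⟩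
  let A : ℕ → ℝ → E → ℝ := fun n t =>
    MeasureTheory.convolution ((φ n).normed volume) (w (p t)) (ContinuousLinearMap.lsmul ℝ ℝ) volume
  have hA : ∀ n, Measurable (Function.uncurry (A n)) := by
    intro n
    apply measurable_uncurry_of_continuous_of_measurable
    · intro x
      have h1 : Continuous (fun y => (φ n).normed volume (x - y)) :=
        (φ n).continuous_normed.comp (by fun_prop)
      obtain ⟨C, hC⟩ := (φ n).hasCompactSupport_normed (μ := volume).exists_bound_of_continuous
        (φ n).continuous_normed
      have := (hcont _ h1 ⟨C, fun y => hC _⟩).comp_continuous hpc hp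
      convert this using 2 with t
      simp only [A, convolution_eq_swap, ContinuousLinearMap.lsmul_apply, smul_eq_mul]
      congr 1; ext y; ring
    · intro t
      apply Continuous.measurable
      exact (φ n).hasCompactSupport_normed.continuous_convolution_left _ (φ n).continuous_normed
        (hint _ (hp t)).locallyIntegrable
  refine ⟨fun t x => limsup (fun n => A n t x) atTop, ?_, ?_⟩
  · exact Measurable.limsup (f := fun n (q : ℝ × E) => A n q.1 q.2) hA
  · intro t ht
    have h2 : Tendsto (fun n => (φ n).rOut) atTop (nhds 0) := by
      have := (tendsto_one_div_add_atTop_nhds_zero_nat (𝕜 := ℝ)).const_mul 2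
      simpa [φ, div_eq_mul_inv] using this
    have := ContDiffBump.ae_convolution_tendsto_right_of_locallyIntegrable (μ := volume) (φ := φ) (K := 2)
      h2 (Eventually.of_forall fun n => by simp [φ, div_eq_mul_inv]) (hint t ht).locallyIntegrable
    filter_upwards [this] with x hx
    have h3 : (fun n => A n t x) = fun n => MeasureTheory.convolution ((φ n).normed volume) (w t)
        (ContinuousLinearMap.lsmul ℝ ℝ) volume x := by
      ext n; simp only [A, hpe t ht]
    show limsup (fun n => A n t x) atTop = w t x
    rw [h3]
    exact hx.limsup_eq
end fpsec3


open MeasureTheory Filter Set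
noncomputable section fpsec4

section lapl
variable {d : ℕ}

lemma fp_smooth_pd {f : EuclideanSpace ℝ (Fin d) → ℝ} (hf : ContDiff ℝ (⊤ : ℕ∞) f)
    (v : EuclideanSpace ℝ (Fin d)) : ContDiff ℝ (⊤ : ℕ∞) (fun y => fderiv ℝ f y v) :=
  (hf.fderiv_right (m := (⊤ : ℕ∞)) (by simp)).clm_apply contDiff_const

lemma fp_lap_cont {f : EuclideanSpace ℝ (Fin d) → ℝ} (hf : ContDiff ℝ (⊤ : ℕ∞) f) :
    Continuous (lap f) := by
  unfold lap
  exact continuous_finsetSum _ fun i _ => (fp_smooth_pd (fp_smooth_pd hf _) _).continuous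

lemma fp_lap_congr {f g : EuclideanSpace ℝ (Fin d) → ℝ} {x : EuclideanSpace ℝ (Fin d)}
    (h : f =ᶠ[nhds x] g) : lap f x = lap g x := by
  unfold lap
  refine Finset.sum_congr rfl fun i _ => ?_
  have : (fun y => fderiv ℝ f y (EuclideanSpace.single i 1)) =ᶠ[nhds x]
      (fun y => fderiv ℝ g y (EuclideanSpace.single i 1)) := by
    filter_upwards [h.fderiv (𝕜 := ℝ)] with y hy
    rw [hy]
  rw [this.fderiv_eq]

lemma fp_lap_mul {f g : EuclideanSpace ℝ (Fin d) → ℝ} (hf : ContDiff ℝ (⊤ : ℕ∞) f)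
    (hg : ContDiff ℝ (⊤ : ℕ∞) g) (x : EuclideanSpace ℝ (Fin d)) :
    lap (fun y => f y * g y) x = f x * lap g x + g x * lap f x +
      2 * ∑ i, fderiv ℝ f x (EuclideanSpace.single i 1) * fderiv ℝ g x (EuclideanSpace.single i 1) := by
  have df := hf.differentiable (by simp)
  have dg := hg.differentiable (by simp)
  unfold lap
  rw [Finset.mul_sum, Finset.mul_sum, Finset.mul_sum, ← Finset.sum_add_distrib, ← Finset.sum_add_distrib]
  refine Finset.sum_congr rfl fun i _ => ?_
  set e := EuclideanSpace.single (𝕜 := ℝ) i (1:ℝ)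
  have h1 : (fun y => fderiv ℝ (fun y => f y * g y) y e) =
      fun y => f y * fderiv ℝ g y e + g y * fderiv ℝ f y e := by
    ext y
    rw [fderiv_fun_mul (df y) (dg y)]
    simp
  have dfe := (fp_smooth_pd hf e).differentiable (by simp)
  have dge := (fp_smooth_pd hg e).differentiable (by simp)
  rw [h1, fderiv_fun_add ((df x).fun_mul (dge x)) ((dg x).fun_mul (dfe x)), fderiv_fun_mul (df x) (dge x),
    fderiv_fun_mul (dg x) (dfe x)]
  simp
  ring

lemma fp_lap_const_mul (c : ℝ) (f : EuclideanSpace ℝ (Fin d) → ℝ) (x) :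
    lap (fun y => c * f y) x = c * lap f x := by
  unfold lap
  rw [Finset.mul_sum]
  refine Finset.sum_congr rfl fun i _ => ?_
  have h : ∀ (F : EuclideanSpace ℝ (Fin d) → ℝ) y, fderiv ℝ (fun y => c * F y) y = c • fderiv ℝ F y := by
    intro F y
    exact congrFun (fderiv_const_smul_field (𝕜 := ℝ) (f := F) c) y
  simp only [h, smul_apply, smul_eq_mul]

lemma fp_fderiv_scale {f : EuclideanSpace ℝ (Fin d) → ℝ} (hf : Differentiable ℝ f) (c : ℝ)
    (x v) : fderiv ℝ (fun y => f (c • y)) x v = c * fderiv ℝ f (c • x) v := by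
  have h : HasFDerivAt (fun y : EuclideanSpace ℝ (Fin d) => c • y)
      (c • ContinuousLinearMap.id ℝ (EuclideanSpace ℝ (Fin d))) x := (hasFDerivAt_id x).const_smul c
  have := (hf (c • x)).hasFDerivAt.comp x h
  rw [show (fun y => f (c • y)) = f ∘ (fun y => c • y) from rfl, this.fderiv]
  simp

lemma fp_lap_scale {f : EuclideanSpace ℝ (Fin d) → ℝ} (hf : ContDiff ℝ (⊤ : ℕ∞) f) (c : ℝ) (x) :
    lap (fun y => f (c • y)) x = c ^ 2 * lap f (c • x) := by
  unfold lap
  rw [Finset.mul_sum]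
  refine Finset.sum_congr rfl fun i _ => ?_
  simp only [fp_fderiv_scale (hf.differentiable (by simp))]
  set e := EuclideanSpace.single (𝕜 := ℝ) i (1:ℝ)
  have de := (fp_smooth_pd hf e).differentiable (by simp)
  have := congrFun (fderiv_const_smul_field (𝕜 := ℝ) (f := fun y => fderiv ℝ f (c • y) e) c) x
  have h2 : fderiv ℝ (fun y => c * fderiv ℝ f (c • y) e) x = c • fderiv ℝ (fun y => fderiv ℝ f (c • y) e) x := this
  rw [h2, smul_apply, fp_fderiv_scale de, smul_eq_mul]
  ring

/-- cutoff approximation with uniform bounds -/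
lemma fp_cutoff {ψ : EuclideanSpace ℝ (Fin d) → ℝ} (hψ : ContDiff ℝ (⊤ : ℕ∞) ψ)
    {C : ℝ} (h0 : ∀ x, |ψ x| ≤ C) (h1 : ∀ x, ‖fderiv ℝ ψ x‖ ≤ C) (h2 : ∀ x, |lap ψ x| ≤ C) :
    ∃ (ψn : ℕ → EuclideanSpace ℝ (Fin d) → ℝ) (K : ℝ), (∀ n, ContDiff ℝ (⊤ : ℕ∞) (ψn n)) ∧
      (∀ n, HasCompactSupport (ψn n)) ∧ (∀ n x, |ψn n x| ≤ K) ∧ (∀ n x, ‖fderiv ℝ (ψn n) x‖ ≤ K) ∧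
      (∀ n x, |lap (ψn n) x| ≤ K) ∧ (∀ x, ∀ᶠ n in atTop, ψn n =ᶠ[nhds x] ψ) := by
  let χ : ContDiffBump (0 : EuclideanSpace ℝ (Fin d)) := ⟨1, 2, by norm_num, by norm_num⟩
  have hχ : ContDiff ℝ (⊤ : ℕ∞) χ := χ.contDiff
  have hC : 0 ≤ C := (abs_nonneg _).trans (h0 0)
  obtain ⟨K1, hK1⟩ := (χ.hasCompactSupport.fderiv (𝕜 := ℝ)).exists_bound_of_continuous
    (hχ.continuous_fderiv (by simp))
  have hlc : HasCompactSupport (lap χ) := by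
    apply χ.hasCompactSupport.mono'
    intro x hx
    by_contra hc
    apply hx
    have : (χ : EuclideanSpace ℝ (Fin d) → ℝ) =ᶠ[nhds x] fun _ => 0 := by
      exact notMem_tsupport_iff_eventuallyEq.1 hc
    rw [fp_lap_congr this]
    simp [lap]
  obtain ⟨K2, hK2⟩ := hlc.exists_bound_of_continuous (fp_lap_cont hχ)
  have hK1' : 0 ≤ K1 := (norm_nonneg _).trans (hK1 0)
  have hK2' : 0 ≤ K2 := (norm_nonneg _).trans (hK2 0)
  let c : ℕ → ℝ := fun n => 1 / ((n : ℝ) + 1)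
  have hc0 : ∀ n, 0 < c n := fun n => by positivity
  have hc1 : ∀ n, c n ≤ 1 := fun n => by
    simp only [c]; rw [div_le_one (by positivity)]; linarith [(Nat.cast_nonneg n : (0:ℝ) ≤ n)]
  have hsm : ∀ n, ContDiff ℝ (⊤ : ℕ∞) (fun x => χ (c n • x)) := fun n =>
    hχ.comp (contDiff_const_smul (c n))
  have hχ1 : ∀ n x, |χ (c n • x)| ≤ 1 := fun n x => by
    rw [abs_of_nonneg χ.nonneg]; exact χ.le_one
  have hfd : ∀ n x v, |fderiv ℝ (fun x => χ (c n • x)) x v| ≤ K1 * ‖v‖ := fun n x v => by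
    rw [fp_fderiv_scale (hχ.differentiable (by simp)), abs_mul, abs_of_pos (hc0 n)]
    calc c n * |fderiv ℝ χ (c n • x) v| ≤ 1 * (K1 * ‖v‖) := by
          gcongr
          · exact hc1 n
          · exact ((fderiv ℝ χ (c n • x)).le_opNorm v).trans (by gcongr; exact hK1 _)
      _ = _ := one_mul _
  have hlp : ∀ n x, |lap (fun x => χ (c n • x)) x| ≤ K2 := fun n x => by
    rw [fp_lap_scale hχ, abs_mul, abs_of_nonneg (by positivity)]
    calc c n ^ 2 * |lap χ (c n • x)| ≤ 1 * K2 := by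
          gcongr
          · exact pow_le_one₀ (hc0 n).le (hc1 n)
          · exact hK2 _
      _ = _ := one_mul _
  refine ⟨fun n x => χ (c n • x) * ψ x, C + (C + K1 * C) + (C + C * K2 + 2 * (d * (K1 * C))),
    fun n => (hsm n).mul hψ, ?_, ?_, ?_, ?_, ?_⟩
  · intro n
    have : HasCompactSupport (fun x => χ (c n • x)) :=
      χ.hasCompactSupport.comp_homeomorph (Homeomorph.smulOfNeZero (c n) (hc0 n).ne')
    exact this.mul_right
  · intro n x
    have : |χ (c n • x) * ψ x| ≤ 1 * C := by
      rw [abs_mul]; exact mul_le_mul (hχ1 n x) (h0 x) (abs_nonneg _) zero_le_one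
    have a1 : 0 ≤ K1 * C := by positivity
    have a2 : 0 ≤ C * K2 := by positivity
    have a3 : 0 ≤ 2 * (d * (K1 * C)) := by positivity
    linarith
  · intro n x
    have a2 : 0 ≤ C * K2 := by positivity
    have a3 : 0 ≤ 2 * (d * (K1 * C)) := by positivity
    suffices h : ‖fderiv ℝ (fun x => χ (c n • x) * ψ x) x‖ ≤ C + K1 * C by linarith
    apply ContinuousLinearMap.opNorm_le_bound _ (by positivity)
    intro v
    rw [fderiv_fun_mul ((hsm n).differentiable (by simp) x) (hψ.differentiable (by simp) x)]
    simp only [add_apply, smul_apply, smul_eq_mul, Real.norm_eq_abs]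
    refine (abs_add_le _ _).trans ?_
    rw [abs_mul, abs_mul]
    have b1 : |fderiv ℝ ψ x v| ≤ C * ‖v‖ :=
      ((fderiv ℝ ψ x).le_opNorm v).trans (by gcongr; exact h1 _)
    have b2 := mul_le_mul (hχ1 n x) b1 (abs_nonneg _) zero_le_one
    have b3 := mul_le_mul (h0 x) (hfd n x v) (abs_nonneg _) hC
    nlinarith
  · intro n x
    have a1 : 0 ≤ K1 * C := by positivity
    suffices h : |lap (fun x => χ (c n • x) * ψ x) x| ≤ C + C * K2 + 2 * (d * (K1 * C)) by linarith
    rw [fp_lap_mul (hsm n) hψ]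
    refine (abs_add_le _ _).trans (add_le_add ((abs_add_le _ _).trans (add_le_add ?_ ?_)) ?_)
    · rw [abs_mul]
      have := mul_le_mul (hχ1 n x) (h2 x) (abs_nonneg _) zero_le_one
      linarith
    · rw [abs_mul]
      exact mul_le_mul (h0 x) (hlp n x) (abs_nonneg _) hC
    · rw [abs_mul, abs_two]
      gcongr
      refine (Finset.abs_sum_le_sum_abs _ _).trans ?_
      refine (Finset.sum_le_card_nsmul _ _ (K1 * C) ?_).trans (by simp)
      intro i _
      rw [abs_mul]
      apply mul_le_mul _ _ (abs_nonneg _) hK1'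
      · simpa using hfd n x (EuclideanSpace.single i 1)
      · have := ((fderiv ℝ ψ x).le_opNorm (EuclideanSpace.single i 1)).trans
          (mul_le_mul_of_nonneg_right (h1 x) (norm_nonneg _))
        simpa using this
  · intro x
    obtain ⟨N, hN⟩ := exists_nat_gt (‖x‖ + 1)
    filter_upwards [eventually_ge_atTop N] with n hn
    filter_upwards [Metric.ball_mem_nhds x one_pos] with y hy
    have hy' : ‖y‖ ≤ ‖x‖ + 1 := by
      have := norm_le_norm_add_norm_sub' y x
      rw [Metric.mem_ball, dist_eq_norm] at hy
      linarith
    have hn' : (N : ℝ) ≤ n := by exact_mod_cast hn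
    have : χ (c n • y) = 1 := by
      apply χ.one_of_mem_closedBall
      rw [mem_closedBall_zero_iff, norm_smul, Real.norm_eq_abs, abs_of_pos (hc0 n)]
      show 1 / ((n : ℝ) + 1) * ‖y‖ ≤ 1
      rw [one_div_mul_eq_div, div_le_one (by positivity)]
      linarith
    rw [this, one_mul]
end lapl
end fpsec4


open MeasureTheory Filter Set
noncomputable section fpsec5

structure FPData {d : ℕ} (T γ M Cb K Cw : ℝ) (Ψ : ℝ → EuclideanSpace ℝ (Fin d) → ℝ)
    (B : ℝ → EuclideanSpace ℝ (Fin d) → EuclideanSpace ℝ (Fin d))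
    (w : ℝ → EuclideanSpace ℝ (Fin d) → ℝ) : Prop where
  hT : 0 < T
  hγ : 0 < γ
  mΨ : Measurable (Function.uncurry Ψ)
  mB : Measurable (Function.uncurry B)
  mw : Measurable (Function.uncurry w)
  Ψl : ∀ t x, γ ≤ Ψ t x
  Ψu : ∀ t x, Ψ t x ≤ M
  Bb : ∀ t x, ‖B t x‖ ≤ Cb
  int : ∀ t, Integrable (w t)
  bK : ∀ t, ∫ x, |w t x| ≤ K
  cont : ∀ ψ : EuclideanSpace ℝ (Fin d) → ℝ, Continuous ψ → (∃ C, ∀ x, |ψ x| ≤ C) →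
      ContinuousOn (fun t => ∫ x, w t x * ψ x) (Icc 0 T)
  bdd : ∀ᵐ t ∂(volume.restrict (Ioo 0 T)), ∀ᵐ x, |w t x| ≤ Cw
  init : ∀ᵐ x, w 0 x = 0
  weak : ∀ φ : ℝ → EuclideanSpace ℝ (Fin d) → ℝ,
    ContDiff ℝ (⊤ : ℕ∞) (Function.uncurry φ) →
    HasCompactSupport (Function.uncurry φ) →
    (∀ p ∈ tsupport (Function.uncurry φ), 0 < p.1 ∧ p.1 < T) →
    (∫ t in Ioo (0 : ℝ) T, ∫ x,
      (w t x * deriv (fun s => φ s x) t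
        + Ψ t x * w t x * lap (φ t) x
        + w t x * fderiv ℝ (φ t) x (B t x))) = 0

namespace FPData
variable {d : ℕ} {T γ M Cb K Cw : ℝ} {Ψ : ℝ → EuclideanSpace ℝ (Fin d) → ℝ}
    {B : ℝ → EuclideanSpace ℝ (Fin d) → EuclideanSpace ℝ (Fin d)}
    {w : ℝ → EuclideanSpace ℝ (Fin d) → ℝ}

lemma mw1 (D : FPData T γ M Cb K Cw Ψ B w) (t : ℝ) : Measurable (w t) := D.mw.comp measurable_prodMk_left
lemma mΨ1 (D : FPData T γ M Cb K Cw Ψ B w) (t : ℝ) : Measurable (Ψ t) := D.mΨ.comp measurable_prodMk_left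
lemma mB1 (D : FPData T γ M Cb K Cw Ψ B w) (t : ℝ) : Measurable (B t) := D.mB.comp measurable_prodMk_left
lemma Cb0 (D : FPData T γ M Cb K Cw Ψ B w) : 0 ≤ Cb := (norm_nonneg _).trans (D.Bb 0 0)
lemma M0 (D : FPData T γ M Cb K Cw Ψ B w) : 0 ≤ M := D.hγ.le.trans ((D.Ψl 0 0).trans (D.Ψu 0 0))
lemma K0 (D : FPData T γ M Cb K Cw Ψ B w) : 0 ≤ K := (integral_nonneg fun _ => abs_nonneg _).trans (D.bK 0)
lemma Ψabs (D : FPData T γ M Cb K Cw Ψ B w) (t x) : |Ψ t x| ≤ M := by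
  rw [abs_of_nonneg (D.hγ.le.trans (D.Ψl t x))]; exact D.Ψu t x

/-- the pairing integrand -/
lemma meas_g (D : FPData T γ M Cb K Cw Ψ B w) {ψ : EuclideanSpace ℝ (Fin d) → ℝ} (hψ : ContDiff ℝ (⊤ : ℕ∞) ψ) :
    Measurable (fun p : ℝ × EuclideanSpace ℝ (Fin d) =>
      Ψ p.1 p.2 * w p.1 p.2 * lap ψ p.2 + w p.1 p.2 * fderiv ℝ ψ p.2 (B p.1 p.2)) := by
  have h1 : Measurable (fun p : ℝ × EuclideanSpace ℝ (Fin d) => fderiv ℝ ψ p.2 (B p.1 p.2)) := by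
    have a : StronglyMeasurable (fun p : ℝ × EuclideanSpace ℝ (Fin d) => fderiv ℝ ψ p.2) :=
      ((hψ.continuous_fderiv (by simp)).comp continuous_snd).stronglyMeasurable
    have b : StronglyMeasurable (fun p : ℝ × EuclideanSpace ℝ (Fin d) => B p.1 p.2) :=
      D.mB.stronglyMeasurable
    exact (isBoundedBilinearMap_apply.continuous.comp_stronglyMeasurable (a.prodMk b)).measurable
  have h2 : Measurable (fun p : ℝ × EuclideanSpace ℝ (Fin d) => lap ψ p.2) :=
    ((fp_lap_cont hψ).comp continuous_snd).measurable
  exact ((D.mΨ.mul D.mw).mul h2).add (D.mw.mul h1)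

lemma g_bound (D : FPData T γ M Cb K Cw Ψ B w) {ψ : EuclideanSpace ℝ (Fin d) → ℝ} {C : ℝ} 
    (h1 : ∀ x, ‖fderiv ℝ ψ x‖ ≤ C) (h2 : ∀ x, |lap ψ x| ≤ C) (t x) :
    ‖Ψ t x * w t x * lap ψ x + w t x * fderiv ℝ ψ x (B t x)‖ ≤ (M * C + C * Cb) * |w t x| := by
  have hC : 0 ≤ C := (abs_nonneg _).trans (h2 0)
  have hM := D.M0
  have hCb := D.Cb0
  rw [Real.norm_eq_abs]
  refine (abs_add_le _ _).trans ?_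
  rw [abs_mul, abs_mul, abs_mul]
  have a1 : |Ψ t x| * |lap ψ x| ≤ M * C := mul_le_mul (D.Ψabs t x) (h2 x) (abs_nonneg _) hM
  have a2 : |fderiv ℝ ψ x (B t x)| ≤ C * Cb :=
    ((fderiv ℝ ψ x).le_opNorm _).trans (mul_le_mul (h1 x) (D.Bb t x) (norm_nonneg _) hC)
  nlinarith [abs_nonneg (w t x)]

lemma g_int (D : FPData T γ M Cb K Cw Ψ B w) {ψ : EuclideanSpace ℝ (Fin d) → ℝ} (hψ : ContDiff ℝ (⊤ : ℕ∞) ψ) {C : ℝ}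
    (h1 : ∀ x, ‖fderiv ℝ ψ x‖ ≤ C) (h2 : ∀ x, |lap ψ x| ≤ C) (t : ℝ) :
    Integrable (fun x => Ψ t x * w t x * lap ψ x + w t x * fderiv ℝ ψ x (B t x)) := by
  refine ((D.int t).abs.const_mul (M * C + C * Cb)).mono' ?_ ?_
  · exact ((D.meas_g hψ).comp (measurable_prodMk_left (x := t))).aestronglyMeasurable
  · exact Eventually.of_forall (D.g_bound h1 h2 t)

lemma g_abs (D : FPData T γ M Cb K Cw Ψ B w) {ψ : EuclideanSpace ℝ (Fin d) → ℝ} {C : ℝ}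
    (h1 : ∀ x, ‖fderiv ℝ ψ x‖ ≤ C) (h2 : ∀ x, |lap ψ x| ≤ C) (t : ℝ) :
    ‖∫ x, (Ψ t x * w t x * lap ψ x + w t x * fderiv ℝ ψ x (B t x))‖ ≤ (M * C + C * Cb) * K := by
  have hC : 0 ≤ C := (abs_nonneg _).trans (h2 0)
  have hM := D.M0
  have hCb := D.Cb0
  refine (norm_integral_le_of_norm_le ((D.int t).abs.const_mul (M * C + C * Cb))
    (Eventually.of_forall (D.g_bound h1 h2 t))).trans ?_
  rw [integral_const_mul]
  gcongr
  exact D.bK t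

lemma g_meas (D : FPData T γ M Cb K Cw Ψ B w) {ψ : EuclideanSpace ℝ (Fin d) → ℝ} (hψ : ContDiff ℝ (⊤ : ℕ∞) ψ) :
    StronglyMeasurable (fun t => ∫ x, (Ψ t x * w t x * lap ψ x + w t x * fderiv ℝ ψ x (B t x))) :=
  (D.meas_g hψ).stronglyMeasurable.integral_prod_right'

lemma weak_cc (D : FPData T γ M Cb K Cw Ψ B w) {ψ : EuclideanSpace ℝ (Fin d) → ℝ} (hψ : ContDiff ℝ (⊤ : ℕ∞) ψ)
    (hc : HasCompactSupport ψ) {C : ℝ} (h0 : ∀ x, |ψ x| ≤ C)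
    (h1 : ∀ x, ‖fderiv ℝ ψ x‖ ≤ C) (h2 : ∀ x, |lap ψ x| ≤ C) :
    ∀ t ∈ Icc 0 T, ∫ x, w t x * ψ x =
      ∫ s in (0:ℝ)..t, ∫ x, (Ψ s x * w s x * lap ψ x + w s x * fderiv ℝ ψ x (B s x)) := by
  have key := fp_time D.hT (fun t => ∫ x, w t x * ψ x)
    (fun t => ∫ x, (Ψ t x * w t x * lap ψ x + w t x * fderiv ℝ ψ x (B t x)))
    (D.cont ψ hψ.continuous ⟨C, h0⟩) ?_ ?_
  · have e0 : ∫ x, w 0 x * ψ x = 0 := by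
      apply integral_eq_zero_of_ae
      filter_upwards [D.init] with x hx
      simp [hx]
    intro t ht
    have := key t ht
    simp only [e0, sub_zero] at this
    exact this
  · refine Measure.integrableOn_of_bounded (M := (M * C + C * Cb) * K) (by simp) 
      (D.g_meas hψ).aestronglyMeasurable ?_
    exact Eventually.of_forall (D.g_abs h1 h2)
  · intro η hη hηc hηs
    have hs : Function.support (Function.uncurry fun t x => η t * ψ x) ⊆ tsupport η ×ˢ tsupport ψ := by
      rintro ⟨t, x⟩ h
      simp only [Function.mem_support, Function.uncurry_apply_pair, mul_ne_zero_iff] at h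
      exact ⟨subset_tsupport _ h.1, subset_tsupport _ h.2⟩
    have hs' : tsupport (Function.uncurry fun t x => η t * ψ x) ⊆ tsupport η ×ˢ tsupport ψ :=
      closure_minimal hs ((isClosed_tsupport _).prod (isClosed_tsupport _))
    have hw := D.weak (fun t x => η t * ψ x)
      (by exact (hη.comp contDiff_fst).mul (hψ.comp contDiff_snd))
      ((hηc.isCompact.prod hc.isCompact).of_isClosed_subset (isClosed_tsupport _) hs')
      (fun p hp => hηs (hs' hp).1)
    refine Eq.trans ?_ hw
    refine integral_congr_ae (Eventually.of_forall fun t => ?_)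
    simp only
    rw [← integral_mul_const, ← integral_mul_const, ← integral_add]
    · refine integral_congr_ae (Eventually.of_forall fun x => ?_)
      simp only
      have e1 : deriv (fun s => η s * ψ x) t = deriv η t * ψ x := by
        rw [deriv_mul_const (hη.differentiable (by simp) t)]
      have e2 : fderiv ℝ (fun x => η t * ψ x) x = η t • fderiv ℝ ψ x :=
        fderiv_const_mul (hψ.differentiable (by simp) x) _
      rw [e1, e2, fp_lap_const_mul]
      simp only [smul_apply, smul_eq_mul]
      ring
    · refine Integrable.mul_const ?_ _
      refine ((D.int t).abs.const_mul C).mono' 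
        ((D.mw1 t).mul hψ.continuous.measurable).aestronglyMeasurable
        (Eventually.of_forall fun x => ?_)
      rw [norm_mul, mul_comm]
      exact mul_le_mul_of_nonneg_right (h0 x) (abs_nonneg _)
    · exact (D.g_int hψ h1 h2 t).mul_const _

lemma weak_bdd (D : FPData T γ M Cb K Cw Ψ B w) {ψ : EuclideanSpace ℝ (Fin d) → ℝ} (hψ : ContDiff ℝ (⊤ : ℕ∞) ψ)
    {C : ℝ} (h0 : ∀ x, |ψ x| ≤ C)
    (h1 : ∀ x, ‖fderiv ℝ ψ x‖ ≤ C) (h2 : ∀ x, |lap ψ x| ≤ C) :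
    ∀ t ∈ Icc 0 T, ∫ x, w t x * ψ x =
      ∫ s in (0:ℝ)..t, ∫ x, (Ψ s x * w s x * lap ψ x + w s x * fderiv ℝ ψ x (B s x)) := by
  obtain ⟨ψn, L, s1, s2, s3, s4, s5, s6⟩ := fp_cutoff hψ h0 h1 h2
  intro t ht
  have l1 : Tendsto (fun n => ∫ x, w t x * ψn n x) atTop (nhds (∫ x, w t x * ψ x)) := by
    refine tendsto_integral_of_dominated_convergence (fun x => L * |w t x|) ?_ ?_ ?_ ?_
    · exact fun n => ((D.mw1 t).mul (s1 n).continuous.measurable).aestronglyMeasurable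
    · exact (D.int t).abs.const_mul L
    · refine fun n => Eventually.of_forall fun x => ?_
      rw [norm_mul, mul_comm]
      exact mul_le_mul_of_nonneg_right (s3 n x) (abs_nonneg _)
    · refine Eventually.of_forall fun x => ?_
      refine tendsto_const_nhds.congr' ?_
      filter_upwards [s6 x] with n hn
      rw [hn.eq_of_nhds]
  have l2 : ∀ s, Tendsto (fun n => ∫ x, (Ψ s x * w s x * lap (ψn n) x + w s x * fderiv ℝ (ψn n) x (B s x)))
      atTop (nhds (∫ x, (Ψ s x * w s x * lap ψ x + w s x * fderiv ℝ ψ x (B s x)))) := by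
    intro s
    refine tendsto_integral_of_dominated_convergence (fun x => (M * L + L * Cb) * |w s x|) ?_ ?_ ?_ ?_
    · exact fun n => (D.g_int (s1 n) (s4 n) (s5 n) s).aestronglyMeasurable
    · exact (D.int s).abs.const_mul _
    · exact fun n => Eventually.of_forall (D.g_bound (s4 n) (s5 n) s)
    · refine Eventually.of_forall fun x => ?_
      refine tendsto_const_nhds.congr' ?_
      filter_upwards [s6 x] with n hn
      rw [fp_lap_congr hn, hn.fderiv_eq]
  have l3 : Tendsto (fun n => ∫ s in (0:ℝ)..t, ∫ x, (Ψ s x * w s x * lap (ψn n) x + w s x * fderiv ℝ (ψn n) x (B s x)))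
      atTop (nhds (∫ s in (0:ℝ)..t, ∫ x, (Ψ s x * w s x * lap ψ x + w s x * fderiv ℝ ψ x (B s x)))) := by
    refine intervalIntegral.tendsto_integral_filter_of_dominated_convergence
      (fun _ => (M * L + L * Cb) * K) ?_ ?_ ?_ ?_
    · exact Eventually.of_forall fun n => (D.g_meas (s1 n)).aestronglyMeasurable
    · exact Eventually.of_forall fun n => Eventually.of_forall fun s _ => D.g_abs (s4 n) (s5 n) s
    · exact intervalIntegrable_const
    · exact Eventually.of_forall fun s _ => l2 s
  refine tendsto_nhds_unique l1 (l3.congr fun n => ?_)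
  exact (D.weak_cc (s1 n) (s2 n) (s3 n) (s4 n) (s5 n) t ht).symm
end FPData
end fpsec5


open MeasureTheory Filter Set
noncomputable section fpsec6
open scoped FourierTransform

section ft
variable {d : ℕ}

def fpw (a : ℝ) (k x : EuclideanSpace ℝ (Fin d)) : ℝ := Real.cos (2 * Real.pi * inner ℝ x k + a)

lemma fpw_smooth (a : ℝ) (k : EuclideanSpace ℝ (Fin d)) : ContDiff ℝ (⊤ : ℕ∞) (fpw a k) := by
  unfold fpw
  exact Real.contDiff_cos.comp ((contDiff_const.mul (contDiff_id.inner ℝ contDiff_const)).add contDiff_const)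

lemma fpw_fderiv (a : ℝ) (k x v : EuclideanSpace ℝ (Fin d)) :
    fderiv ℝ (fpw a k) x v = 2 * Real.pi * inner ℝ v k * fpw (a + Real.pi / 2) k x := by
  have h0 : HasFDerivAt (fun x : EuclideanSpace ℝ (Fin d) => 2 * Real.pi * inner ℝ x k + a)
      ((2 * Real.pi) • innerSL ℝ k) x := by
    have := (((innerSL ℝ k).hasFDerivAt (x := x)).const_smul (2 * Real.pi)).add_const a
    refine this.congr_of_eventuallyEq (Eventually.of_forall fun y => ?_)
    simp [real_inner_comm]
  have h1 := h0.cos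
  have h2 : fderiv ℝ (fpw a k) x = _ := h1.fderiv
  rw [h2]
  unfold fpw
  rw [← add_assoc, Real.cos_add_pi_div_two]
  simp [real_inner_comm]
  ring

lemma fpw_abs (a : ℝ) (k x : EuclideanSpace ℝ (Fin d)) : |fpw a k x| ≤ 1 := Real.abs_cos_le_one _

lemma fpw_lap (a : ℝ) (k x : EuclideanSpace ℝ (Fin d)) :
    lap (fpw a k) x = - (4 * Real.pi ^ 2 * ‖k‖ ^ 2) * fpw a k x := by
  unfold lap
  simp only [fpw_fderiv]
  have : ∀ i : Fin d, fderiv ℝ (fun y => 2 * Real.pi * inner ℝ (EuclideanSpace.single i (1:ℝ)) k *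
      fpw (a + Real.pi / 2) k y) x (EuclideanSpace.single i 1) = - (4 * Real.pi ^ 2) * fpw a k x * (k i) ^ 2 := by
    intro i
    rw [fderiv_const_mul ((fpw_smooth _ k).differentiable (by simp) x), smul_apply, fpw_fderiv]
    have e : fpw (a + Real.pi / 2 + Real.pi / 2) k x = - fpw a k x := by
      unfold fpw
      rw [show 2 * Real.pi * inner ℝ x k + (a + Real.pi / 2 + Real.pi / 2) =
        (2 * Real.pi * inner ℝ x k + a) + Real.pi by ring, Real.cos_add_pi]
    rw [e]
    simp [EuclideanSpace.inner_single_left]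
    ring
  simp only [this]
  rw [← Finset.mul_sum, EuclideanSpace.real_norm_sq_eq]
  ring

lemma fp_re (f : EuclideanSpace ℝ (Fin d) → ℝ) (hf : Integrable f) (k) :
    (𝓕 (fun x => (f x : ℂ)) k).re = ∫ x, f x * fpw 0 k x := by
  have hi : Integrable (fun x => Complex.exp (((-2 * Real.pi * inner ℝ x k : ℝ) : ℂ) * Complex.I) • (f x : ℂ)) := by
    refine hf.abs.mono' ?_ (Eventually.of_forall fun x => ?_)
    · have hc : Continuous (fun x : EuclideanSpace ℝ (Fin d) =>
          Complex.exp (((-2 * Real.pi * inner ℝ x k : ℝ) : ℂ) * Complex.I)) := by fun_prop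
      exact hc.aestronglyMeasurable.smul hf.ofReal.aestronglyMeasurable
    · rw [norm_smul, Complex.norm_exp_ofReal_mul_I]; simp
  rw [Real.fourier_eq', ← Complex.reCLM_apply, ← Complex.reCLM.integral_comp_comm hi]
  refine integral_congr_ae (Eventually.of_forall fun x => ?_)
  simp only [Complex.reCLM_apply, smul_eq_mul, Complex.re_mul_ofReal, Complex.exp_ofReal_mul_I_re, fpw]
  rw [show -2 * Real.pi * inner ℝ x k = -(2 * Real.pi * inner ℝ x k + 0) by ring, Real.cos_neg, mul_comm]

lemma fp_im (f : EuclideanSpace ℝ (Fin d) → ℝ) (hf : Integrable f) (k) :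
    (𝓕 (fun x => (f x : ℂ)) k).im = ∫ x, f x * fpw (0 + Real.pi / 2) k x := by
  have hi : Integrable (fun x => Complex.exp (((-2 * Real.pi * inner ℝ x k : ℝ) : ℂ) * Complex.I) • (f x : ℂ)) := by
    refine hf.abs.mono' ?_ (Eventually.of_forall fun x => ?_)
    · have hc : Continuous (fun x : EuclideanSpace ℝ (Fin d) =>
          Complex.exp (((-2 * Real.pi * inner ℝ x k : ℝ) : ℂ) * Complex.I)) := by fun_prop
      exact hc.aestronglyMeasurable.smul hf.ofReal.aestronglyMeasurable
    · rw [norm_smul, Complex.norm_exp_ofReal_mul_I]; simp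
  rw [Real.fourier_eq', ← Complex.imCLM_apply, ← Complex.imCLM.integral_comp_comm hi]
  refine integral_congr_ae (Eventually.of_forall fun x => ?_)
  simp only [Complex.imCLM_apply, smul_eq_mul, Complex.im_mul_ofReal, Complex.exp_ofReal_mul_I_im, fpw]
  rw [zero_add, Real.cos_add_pi_div_two, show -2 * Real.pi * inner ℝ x k = -(2 * Real.pi * inner ℝ x k) by ring, Real.sin_neg, mul_comm]

end ft

namespace FPData
variable {d : ℕ} {T γ M Cb K Cw : ℝ} {Ψ : ℝ → EuclideanSpace ℝ (Fin d) → ℝ}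
    {B : ℝ → EuclideanSpace ℝ (Fin d) → EuclideanSpace ℝ (Fin d)}
    {w : ℝ → EuclideanSpace ℝ (Fin d) → ℝ}

lemma intΨ (D : FPData T γ M Cb K Cw Ψ B w) (t : ℝ) : Integrable (fun x => Ψ t x * w t x) := by
  refine ((D.int t).abs.const_mul M).mono' ((D.mΨ1 t).mul (D.mw1 t)).aestronglyMeasurable
    (Eventually.of_forall fun x => ?_)
  rw [norm_mul]
  exact mul_le_mul_of_nonneg_right (D.Ψabs t x) (abs_nonneg _)

lemma mBj (D : FPData T γ M Cb K Cw Ψ B w) (j : Fin d) :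
    Measurable (fun p : ℝ × EuclideanSpace ℝ (Fin d) => B p.1 p.2 j) :=
  (EuclideanSpace.proj (𝕜 := ℝ) j).continuous.measurable.comp D.mB

lemma Bj (D : FPData T γ M Cb K Cw Ψ B w) (j : Fin d) (t x) : |B t x j| ≤ Cb :=
  (PiLp.norm_apply_le (B t x) j).trans (D.Bb t x)

lemma intB (D : FPData T γ M Cb K Cw Ψ B w) (j : Fin d) (t : ℝ) :
    Integrable (fun x => B t x j * w t x) := by
  refine ((D.int t).abs.const_mul Cb).mono'
    (((D.mBj j).comp (measurable_prodMk_left (x := t))).mul (D.mw1 t)).aestronglyMeasurable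
    (Eventually.of_forall fun x => ?_)
  rw [norm_mul]
  exact mul_le_mul_of_nonneg_right (D.Bj j t x) (abs_nonneg _)

lemma int_fpw {f : EuclideanSpace ℝ (Fin d) → ℝ} (hf : Integrable f) (a k) :
    Integrable (fun x => f x * fpw a k x) := by
  refine hf.abs.mono' (hf.aestronglyMeasurable.mul (fpw_smooth a k).continuous.aestronglyMeasurable)
    (Eventually.of_forall fun x => ?_)
  rw [norm_mul]
  exact mul_le_of_le_one_right (abs_nonneg _) (fpw_abs a k x)

lemma phase (D : FPData T γ M Cb K Cw Ψ B w) (a : ℝ) (k : EuclideanSpace ℝ (Fin d)) :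
    ∀ t ∈ Icc 0 T, ∫ x, w t x * fpw a k x =
      ∫ s in (0:ℝ)..t, (- (4 * Real.pi ^ 2 * ‖k‖ ^ 2) * (∫ x, (Ψ s x * w s x) * fpw a k x) +
        2 * Real.pi * ∑ j, k j * ∫ x, (B s x j * w s x) * fpw (a + Real.pi / 2) k x) := by
  intro t ht
  have hp := Real.pi_pos
  have := D.weak_bdd (fpw_smooth a k) (C := 1 + 2 * Real.pi * ‖k‖ + 4 * Real.pi ^ 2 * ‖k‖ ^ 2)
    (fun x => (fpw_abs a k x).trans ?_) (fun x => ?_) (fun x => ?_) t ht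
  · rw [this]
    refine intervalIntegral.integral_congr fun s _ => ?_
    simp only
    have e : ∀ x, Ψ s x * w s x * lap (fpw a k) x + w s x * fderiv ℝ (fpw a k) x (B s x) =
      - (4 * Real.pi ^ 2 * ‖k‖ ^ 2) * ((Ψ s x * w s x) * fpw a k x) +
        ∑ j, 2 * Real.pi * k j * ((B s x j * w s x) * fpw (a + Real.pi / 2) k x) := by
      intro x
      rw [fpw_lap, fpw_fderiv]
      have : inner ℝ (B s x) k = ∑ j, B s x j * k j := by
        rw [PiLp.inner_apply]; simp [mul_comm]
      rw [this, Finset.mul_sum, Finset.sum_mul, Finset.mul_sum]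
      congr 1
      · ring
      · exact Finset.sum_congr rfl fun j _ => by ring
    simp only [e]
    rw [integral_add ((int_fpw (D.intΨ s) a k).const_mul _)
      (integrable_finsetSum _ fun j _ => ((int_fpw (D.intB j s) _ k).const_mul _)),
      integral_const_mul, integral_finsetSum _ fun j _ => ((int_fpw (D.intB j s) _ k).const_mul _)]
    simp only [integral_const_mul]
    rw [Finset.mul_sum]
    congr 1
    exact Finset.sum_congr rfl fun j _ => by ring
  · have : 0 ≤ 2 * Real.pi * ‖k‖ + 4 * Real.pi ^ 2 * ‖k‖ ^ 2 := by positivity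
    linarith
  · have h4 : 0 ≤ 1 + 4 * Real.pi ^ 2 * ‖k‖ ^ 2 := by positivity
    refine (ContinuousLinearMap.opNorm_le_bound _ (M := 2 * Real.pi * ‖k‖) (by positivity) fun v => ?_).trans (by linarith)
    rw [fpw_fderiv, norm_mul, norm_mul, Real.norm_of_nonneg (by positivity : (0:ℝ) ≤ 2 * Real.pi)]
    calc 2 * Real.pi * ‖inner ℝ v k‖ * ‖fpw (a + Real.pi / 2) k x‖ ≤ 2 * Real.pi * (‖v‖ * ‖k‖) * 1 := by
          gcongr
          · exact norm_inner_le_norm _ _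
          · exact fpw_abs _ _ _
      _ = _ := by ring
  · have h4 : 0 ≤ 1 + 2 * Real.pi * ‖k‖ := by positivity
    rw [fpw_lap, abs_mul, abs_neg, abs_of_nonneg (by positivity)]
    have := mul_le_of_le_one_right (by positivity : 0 ≤ 4 * Real.pi ^ 2 * ‖k‖ ^ 2) (fpw_abs a k x)
    linarith

end FPData
end fpsec6


open MeasureTheory Filter Set
noncomputable section fpsec7
open scoped FourierTransform

section ft
variable {d : ℕ}

def fpC (f : EuclideanSpace ℝ (Fin d) → ℝ) (k : EuclideanSpace ℝ (Fin d)) : ℝ := ∫ x, f x * fpw 0 k x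
def fpS (f : EuclideanSpace ℝ (Fin d) → ℝ) (k : EuclideanSpace ℝ (Fin d)) : ℝ :=
  ∫ x, f x * fpw (0 + Real.pi / 2) k x

lemma fp_four (f : EuclideanSpace ℝ (Fin d) → ℝ) (hf : Integrable f) (k) :
    𝓕 (fun x => (f x : ℂ)) k = ⟨fpC f k, fpS f k⟩ :=
  Complex.ext (fp_re f hf k) (fp_im f hf k)

lemma fp_memC (f : EuclideanSpace ℝ (Fin d) → ℝ) (hf : Integrable f) (h2 : MemLp f 2) :
    MemLp (fpC f) 2 := by
  have := (fp_memLp (fun x => (f x : ℂ)) hf.ofReal h2.ofReal).re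
  convert this using 1
  ext k
  simp [fp_four f hf]

lemma fp_memS (f : EuclideanSpace ℝ (Fin d) → ℝ) (hf : Integrable f) (h2 : MemLp f 2) :
    MemLp (fpS f) 2 := by
  have := (fp_memLp (fun x => (f x : ℂ)) hf.ofReal h2.ofReal).im
  convert this using 1
  ext k
  simp [fp_four f hf]

lemma fp_planch (f g : EuclideanSpace ℝ (Fin d) → ℝ) (hf : Integrable f) (hf2 : MemLp f 2)
    (hg : Integrable g) (hg2 : MemLp g 2) :
    Integrable (fun k => fpC f k * fpC g k + fpS f k * fpS g k) ∧
    ∫ k, (fpC f k * fpC g k + fpS f k * fpS g k) = ∫ x, f x * g x := by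
  have hi : Integrable (fun k => fpC f k * fpC g k + fpS f k * fpS g k) :=
    ((fp_memC f hf hf2).integrable_mul (fp_memC g hg hg2)).add
      ((fp_memS f hf hf2).integrable_mul (fp_memS g hg hg2))
  refine ⟨hi, ?_⟩
  have h := congrArg Complex.re (fp_inner (fun x => (f x : ℂ)) (fun x => (g x : ℂ))
    hf.ofReal hf2.ofReal hg.ofReal hg2.ofReal)
  have i1 : Integrable (fun k => inner ℂ (𝓕 (fun x => (f x : ℂ)) k) (𝓕 (fun x => (g x : ℂ)) k)) := by
    have := (fp_memLp _ hg.ofReal hg2.ofReal).integrable_mul (fp_memLp _ hf.ofReal hf2.ofReal).star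
    refine this.congr (Eventually.of_forall fun k => ?_)
    simp [mul_comm]
  have i2 : Integrable (fun x => inner ℂ (f x : ℂ) (g x : ℂ)) := by
    have := (hg2.integrable_mul hf2).ofReal (𝕜 := ℂ)
    simpa [mul_comm] using this
  rw [← Complex.reCLM_apply, ← Complex.reCLM_apply, ← Complex.reCLM.integral_comp_comm i1,
    ← Complex.reCLM.integral_comp_comm i2] at h
  convert h using 2
  · ext k
    simp [fp_four f hf, fp_four g hg]; ring
  · ext k
    simp; ring

lemma fpC_bound {f : EuclideanSpace ℝ (Fin d) → ℝ} (hf : Integrable f) (a k) :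
    |∫ x, f x * fpw a k x| ≤ ∫ x, |f x| := by
  rw [← Real.norm_eq_abs]
  refine norm_integral_le_of_norm_le hf.abs (Eventually.of_forall fun x => ?_)
  rw [norm_mul]
  exact mul_le_of_le_one_right (abs_nonneg _) (fpw_abs a k x)

lemma fp_meas {g : ℝ → EuclideanSpace ℝ (Fin d) → ℝ} (hg : Measurable (Function.uncurry g)) (a : ℝ) :
    Measurable (fun p : ℝ × EuclideanSpace ℝ (Fin d) => ∫ x, g p.1 x * fpw a p.2 x) := by
  have h : Measurable (fun q : (ℝ × EuclideanSpace ℝ (Fin d)) × EuclideanSpace ℝ (Fin d) =>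
      g q.1.1 q.2 * fpw a q.1.2 q.2) := by
    refine Measurable.mul (hg.comp (f := fun q : (ℝ × EuclideanSpace ℝ (Fin d)) × EuclideanSpace ℝ (Fin d) => (q.1.1, q.2)) (by fun_prop)) ?_
    apply Continuous.measurable
    unfold fpw
    fun_prop
  exact (h.stronglyMeasurable.integral_prod_right').measurable

end ft
end fpsec7


open MeasureTheory Filter Set
noncomputable section fpsec8

lemma fp_gronwall {T C : ℝ} (hC : 0 ≤ C) {N D : ℝ → ℝ} (hD : IntegrableOn D (Ioc 0 T))
    (hN : ∀ t ∈ Icc 0 T, N t = ∫ s in (0:ℝ)..t, D s) (hN0 : ∀ t, 0 ≤ N t)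
    (hDN : ∀ᵐ s ∂(volume.restrict (Ioc 0 T)), D s ≤ C * N s) :
    ∀ t ∈ Icc 0 T, N t = 0 := by
  rcases lt_or_ge T 0 with h | hT
  · intro t ht; exact absurd (ht.1.trans ht.2) (not_le.2 h)
  have hDi : IntervalIntegrable D volume 0 T := (intervalIntegrable_iff_integrableOn_Ioc_of_le hT).2 hD
  have hNc : ContinuousOn N (Icc 0 T) := by
    refine ContinuousOn.congr ?_ hN
    have := intervalIntegral.continuousOn_primitive_interval (a := 0) (b := T) (f := D) (μ := volume)
      (by rw [uIcc_of_le hT]; exact (integrableOn_Icc_iff_integrableOn_Ioc).2 hD)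
    rwa [uIcc_of_le hT] at this
  have hNi : ∀ t ∈ Icc 0 T, IntervalIntegrable N volume 0 t := fun t ht =>
    (hNc.mono (Icc_subset_Icc_right ht.2)).intervalIntegrable_of_Icc ht.1
  have h1 : ∀ t ∈ Icc 0 T, N t ≤ C * ∫ s in (0:ℝ)..t, N s := by
    intro t ht
    rw [hN t ht, ← intervalIntegral.integral_const_mul]
    refine intervalIntegral.integral_mono_ae_restrict ht.1 ?_ ((hNi t ht).const_mul C) ?_
    · exact (intervalIntegrable_iff_integrableOn_Ioc_of_le ht.1).2 (hD.mono_set (Ioc_subset_Ioc_right ht.2))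
    · rw [← restrict_Ioc_eq_restrict_Icc]
      exact ae_mono (Measure.restrict_mono (Ioc_subset_Ioc_right ht.2) le_rfl) hDN
  have hP0 : ∀ t ∈ Icc 0 T, 0 ≤ ∫ s in (0:ℝ)..t, N s := fun t ht =>
    intervalIntegral.integral_nonneg ht.1 fun s _ => hN0 s
  have h2 : ∀ t ∈ Icc 0 T, ‖∫ s in (0:ℝ)..t, N s‖ ≤ gronwallBound 0 C 0 (t - 0) := by
    refine norm_le_gronwallBound_of_norm_deriv_right_le (f' := N) ?_ ?_ ?_ ?_
    · have := intervalIntegral.continuousOn_primitive_interval (a := 0) (b := T) (f := N) (μ := volume)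
        (by rw [uIcc_of_le hT]; exact hNc.integrableOn_Icc)
      rwa [uIcc_of_le hT] at this
    · intro t ht
      have hs : (Icc 0 T) ∈ nhdsWithin t (Ici t) := by
        exact mem_of_superset (Icc_mem_nhdsGE ht.2) (Icc_subset_Icc_left ht.1)
      have hs2 : (Icc 0 T) ∈ nhdsWithin t (Ioi t) := nhdsWithin_mono t Ioi_subset_Ici_self hs
      refine intervalIntegral.integral_hasDerivWithinAt_right (hNi t ⟨ht.1, ht.2.le⟩) ?_ ?_
      · exact ⟨Icc 0 T, hs2, hNc.aestronglyMeasurable measurableSet_Icc⟩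
      · have := (hNc t ⟨ht.1, ht.2.le⟩).mono_of_mem_nhdsWithin hs
        exact this.mono Ioi_subset_Ici_self
    · simp
    · intro t ht
      have := h1 t ⟨ht.1, ht.2.le⟩
      rw [Real.norm_of_nonneg (hN0 t), Real.norm_of_nonneg (hP0 t ⟨ht.1, ht.2.le⟩)]
      linarith
  intro t ht
  have h3 := h2 t ht
  have : gronwallBound 0 C 0 (t - 0) = 0 := by
    simp [gronwallBound_ε0]
  rw [this] at h3
  have h4 := norm_le_zero_iff.1 h3
  have h5 := h1 t ht
  rw [h4, mul_zero] at h5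
  exact le_antisymm h5 (hN0 t)

/-- pointwise inequalities -/
lemma fp_ineq {d : ℕ} (ε ρ l P Q Fc Fs : ℝ) (Cj Sj κ : Fin d → ℝ) (hε : 0 < ε) (hρ : ρ * (1 + l) = 1)
    (hρ0 : 0 < ρ) (hl : 0 ≤ l) (hκ : ∀ j, κ j ^ 2 ≤ l) :
    2 * ρ * (P * (- l * Fc + ∑ j, κ j * Sj j) + Q * (- l * Fs - ∑ j, κ j * Cj j)) ≤
      -2 * (P * Fc + Q * Fs) + ((d + 1) / ε) * (ρ * (P ^ 2 + Q ^ 2)) +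
        ε * (Fc ^ 2 + Fs ^ 2 + ∑ j, (Cj j ^ 2 + Sj j ^ 2)) := by
  have hρ1 : ρ ≤ 1 := by nlinarith
  have e1 : 2 * ρ * (P * (- l * Fc + ∑ j, κ j * Sj j) + Q * (- l * Fs - ∑ j, κ j * Cj j)) =
    -2 * (P * Fc + Q * Fs) + 2 * ρ * (P * Fc + Q * Fs) +
      ∑ j, 2 * ρ * (P * (κ j * Sj j) - Q * (κ j * Cj j)) := by
    rw [← Finset.mul_sum, Finset.sum_sub_distrib, ← Finset.mul_sum, ← Finset.mul_sum]
    linear_combination (-2 * (P * Fc + Q * Fs)) * hρ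
  have y : ∀ a b : ℝ, 2 * (a * b) ≤ (1 / ε) * a ^ 2 + ε * b ^ 2 := by
    intro a b
    have : (1 / ε) * a ^ 2 + ε * b ^ 2 - 2 * (a * b) = (1 / ε) * (a - ε * b) ^ 2 := by
      field_simp; ring
    have h : 0 ≤ (1 / ε) * (a - ε * b) ^ 2 := by positivity
    linarith
  have e2 : 2 * ρ * (P * Fc + Q * Fs) ≤ (1 / ε) * (ρ * (P ^ 2 + Q ^ 2)) + ε * (Fc ^ 2 + Fs ^ 2) := by
    have a1 := mul_le_mul_of_nonneg_left (add_le_add (y P Fc) (y Q Fs)) hρ0.le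
    have a2 : ρ * (ε * (Fc ^ 2 + Fs ^ 2)) ≤ ε * (Fc ^ 2 + Fs ^ 2) :=
      mul_le_of_le_one_left (by positivity) hρ1
    nlinarith
  have e3 : ∀ j, 2 * ρ * (P * (κ j * Sj j) - Q * (κ j * Cj j)) ≤
      (1 / ε) * (ρ * (P ^ 2 + Q ^ 2)) + ε * (Cj j ^ 2 + Sj j ^ 2) := by
    intro j
    have a1 := mul_le_mul_of_nonneg_left (add_le_add (y P (κ j * Sj j)) (y Q (- (κ j * Cj j)))) hρ0.le
    have a3 : ρ * κ j ^ 2 ≤ 1 := by nlinarith [hκ j]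
    have a2 : (ρ * κ j ^ 2) * (ε * (Cj j ^ 2 + Sj j ^ 2)) ≤ ε * (Cj j ^ 2 + Sj j ^ 2) :=
      mul_le_of_le_one_left (by positivity) a3
    nlinarith
  have e4 := Finset.sum_le_sum (s := Finset.univ) fun j _ => e3 j
  rw [Finset.sum_add_distrib, ← Finset.mul_sum _ _ ε] at e4
  simp only [Finset.sum_const, Finset.card_univ, Fintype.card_fin, nsmul_eq_mul] at e4
  rw [e1]
  have : ((d:ℝ) + 1) / ε * (ρ * (P ^ 2 + Q ^ 2)) = d * (1 / ε * (ρ * (P ^ 2 + Q ^ 2))) + 1 / ε * (ρ * (P ^ 2 + Q ^ 2)) := by ring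
  rw [this]
  linarith

lemma fp_abs {d : ℕ} (ρ l P Q Fc Fs : ℝ) (Cj Sj κ : Fin d → ℝ) (hρ : ρ * (1 + l) = 1)
    (hρ0 : 0 < ρ) (hl : 0 ≤ l) (hκ : ∀ j, κ j ^ 2 ≤ l) :
    |2 * ρ * (P * (- l * Fc + ∑ j, κ j * Sj j) + Q * (- l * Fs - ∑ j, κ j * Cj j))| ≤
      (d + 3) * (P ^ 2 + Q ^ 2) +
        3 * (Fc ^ 2 + Fs ^ 2 + ∑ j, (Cj j ^ 2 + Sj j ^ 2)) := by
  have hρ1 : ρ ≤ 1 := by nlinarith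
  have hS : 0 ≤ ∑ j, (Cj j ^ 2 + Sj j ^ 2) := Finset.sum_nonneg fun j _ => by positivity
  have hd : (0:ℝ) ≤ d := Nat.cast_nonneg d
  have hρP : (d + 1 : ℝ) * (ρ * (P ^ 2 + Q ^ 2)) ≤ (d + 1) * (P ^ 2 + Q ^ 2) := by
    have := mul_le_of_le_one_left (by positivity : 0 ≤ P ^ 2 + Q ^ 2) hρ1
    gcongr
  rw [abs_le]
  constructor
  · have h := fp_ineq 1 ρ l (-P) (-Q) Fc Fs Cj Sj κ one_pos hρ hρ0 hl hκ
    simp only [div_one, neg_sq] at h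
    nlinarith [sq_nonneg (P - Fc), sq_nonneg (Q - Fs), sq_nonneg (P + Fc), sq_nonneg (Q + Fs)]
  · have h := fp_ineq 1 ρ l P Q Fc Fs Cj Sj κ one_pos hρ hρ0 hl hκ
    simp only [div_one] at h
    nlinarith [sq_nonneg (P - Fc), sq_nonneg (Q - Fs), sq_nonneg (P + Fc), sq_nonneg (Q + Fs)]
end fpsec8


open MeasureTheory Filter Set
noncomputable section fpsec9

def fpl {d : ℕ} (k : EuclideanSpace ℝ (Fin d)) : ℝ := 4 * Real.pi ^ 2 * ‖k‖ ^ 2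
def fpk {d : ℕ} (k : EuclideanSpace ℝ (Fin d)) (j : Fin d) : ℝ := 2 * Real.pi * k j
def fprho {d : ℕ} (k : EuclideanSpace ℝ (Fin d)) : ℝ := (1 + fpl k)⁻¹

section
variable {d : ℕ} 
lemma fpl_nn (k : EuclideanSpace ℝ (Fin d)) : 0 ≤ fpl k := by unfold fpl; positivity
lemma fprho_pos (k : EuclideanSpace ℝ (Fin d)) : 0 < fprho k :=
  inv_pos.2 (by have := fpl_nn k; linarith)
lemma fprho_mul (k : EuclideanSpace ℝ (Fin d)) : fprho k * (1 + fpl k) = 1 :=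
  inv_mul_cancel₀ (by have := fpl_nn k; linarith)
lemma fpk_sq (k : EuclideanSpace ℝ (Fin d)) (j) : fpk k j ^ 2 ≤ fpl k := by
  unfold fpk fpl
  have : (k j) ^ 2 ≤ ‖k‖ ^ 2 := by
    rw [← sq_abs]
    exact pow_le_pow_left₀ (abs_nonneg _) (PiLp.norm_apply_le k j) 2
  nlinarith [Real.pi_pos, sq_nonneg Real.pi]
lemma fpl_cont : Continuous (fpl (d := d)) := by unfold fpl; fun_prop
lemma fpk_cont (j) : Continuous (fun k : EuclideanSpace ℝ (Fin d) => fpk k j) := by unfold fpk; fun_prop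
lemma fprho_cont : Continuous (fprho (d := d)) := by
  unfold fprho
  exact (continuous_const.add fpl_cont).inv₀ fun k => by
    have := fpl_nn k
    show 1 + fpl k ≠ 0
    linarith

variable (Ψ : ℝ → EuclideanSpace ℝ (Fin d) → ℝ)
    (B : ℝ → EuclideanSpace ℝ (Fin d) → EuclideanSpace ℝ (Fin d))
    (w : ℝ → EuclideanSpace ℝ (Fin d) → ℝ)
def fpA (s : ℝ) (k : EuclideanSpace ℝ (Fin d)) : ℝ :=
  - fpl k * fpC (fun x => Ψ s x * w s x) k + ∑ j, fpk k j * fpS (fun x => B s x j * w s x) k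
def fpD (s : ℝ) (k : EuclideanSpace ℝ (Fin d)) : ℝ :=
  - fpl k * fpS (fun x => Ψ s x * w s x) k - ∑ j, fpk k j * fpC (fun x => B s x j * w s x) k
def fpE (s : ℝ) (k : EuclideanSpace ℝ (Fin d)) : ℝ :=
  2 * fprho k * (fpC (w s) k * fpA Ψ B w s k + fpS (w s) k * fpD Ψ B w s k)
end

namespace FPData
variable {d : ℕ} {T γ M Cb K Cw : ℝ} {Ψ : ℝ → EuclideanSpace ℝ (Fin d) → ℝ}
    {B : ℝ → EuclideanSpace ℝ (Fin d) → EuclideanSpace ℝ (Fin d)}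
    {w : ℝ → EuclideanSpace ℝ (Fin d) → ℝ}

lemma phaseC (D : FPData T γ M Cb K Cw Ψ B w) (k : EuclideanSpace ℝ (Fin d)) :
    ∀ t ∈ Icc 0 T, fpC (w t) k = ∫ s in (0:ℝ)..t, fpA Ψ B w s k := by
  intro t ht
  unfold fpC
  rw [D.phase 0 k t ht]
  refine intervalIntegral.integral_congr fun s _ => ?_
  simp only [fpA, fpl, fpk, fpC, fpS]
  rw [Finset.mul_sum]
  simp only [mul_assoc]

lemma phaseS (D : FPData T γ M Cb K Cw Ψ B w) (k : EuclideanSpace ℝ (Fin d)) :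
    ∀ t ∈ Icc 0 T, fpS (w t) k = ∫ s in (0:ℝ)..t, fpD Ψ B w s k := by
  intro t ht
  unfold fpS
  rw [D.phase _ k t ht]
  refine intervalIntegral.integral_congr fun s _ => ?_
  simp only [fpD, fpl, fpk, fpC, fpS]
  have e : ∀ x, fpw (0 + Real.pi / 2 + Real.pi / 2) k x = - fpw 0 k x := by
    intro x
    unfold fpw
    rw [show 2 * Real.pi * inner ℝ x k + (0 + Real.pi / 2 + Real.pi / 2) =
      (2 * Real.pi * inner ℝ x k + 0) + Real.pi by ring, Real.cos_add_pi]
  simp only [e, mul_neg, integral_neg, Finset.sum_neg_distrib]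
  rw [sub_eq_add_neg, Finset.mul_sum]
  simp only [mul_assoc]

lemma mΨw (D : FPData T γ M Cb K Cw Ψ B w) : Measurable (Function.uncurry fun s x => Ψ s x * w s x) :=
  D.mΨ.mul D.mw
lemma mBw (D : FPData T γ M Cb K Cw Ψ B w) (j) : Measurable (Function.uncurry fun s x => B s x j * w s x) :=
  (D.mBj j).mul D.mw

lemma mA (D : FPData T γ M Cb K Cw Ψ B w) :
    Measurable (fun p : ℝ × EuclideanSpace ℝ (Fin d) => fpA Ψ B w p.1 p.2) := by
  unfold fpA
  refine (((fpl_cont.measurable.comp measurable_snd).neg).mul (fp_meas D.mΨw 0)).add ?_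
  exact Finset.measurable_fun_sum _ fun j _ =>
    ((fpk_cont j).measurable.comp measurable_snd).mul (fp_meas (D.mBw j) _)

lemma mD (D : FPData T γ M Cb K Cw Ψ B w) :
    Measurable (fun p : ℝ × EuclideanSpace ℝ (Fin d) => fpD Ψ B w p.1 p.2) := by
  unfold fpD
  refine (((fpl_cont.measurable.comp measurable_snd).neg).mul (fp_meas D.mΨw _)).sub ?_
  exact Finset.measurable_fun_sum _ fun j _ =>
    ((fpk_cont j).measurable.comp measurable_snd).mul (fp_meas (D.mBw j) _)

lemma mE (D : FPData T γ M Cb K Cw Ψ B w) :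
    Measurable (fun p : ℝ × EuclideanSpace ℝ (Fin d) => fpE Ψ B w p.1 p.2) := by
  unfold fpE
  exact ((fprho_cont.measurable.comp measurable_snd).const_mul 2).mul
    (((fp_meas D.mw _).mul D.mA).add ((fp_meas D.mw _).mul D.mD))

lemma bΨ (D : FPData T γ M Cb K Cw Ψ B w) (a s k) : |∫ x, (Ψ s x * w s x) * fpw a k x| ≤ M * K := by
  refine (fpC_bound (D.intΨ s) a k).trans ?_
  refine (integral_mono (D.intΨ s).abs ((D.int s).abs.const_mul M) fun x => ?_).trans ?_
  · simp only [abs_mul]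
    exact mul_le_mul_of_nonneg_right (D.Ψabs s x) (abs_nonneg _)
  · rw [integral_const_mul]
    exact mul_le_mul_of_nonneg_left (D.bK s) D.M0

lemma bB (D : FPData T γ M Cb K Cw Ψ B w) (j a s k) : |∫ x, (B s x j * w s x) * fpw a k x| ≤ Cb * K := by
  refine (fpC_bound (D.intB j s) a k).trans ?_
  refine (integral_mono (D.intB j s).abs ((D.int s).abs.const_mul Cb) fun x => ?_).trans ?_
  · simp only [abs_mul]
    exact mul_le_mul_of_nonneg_right (D.Bj j s x) (abs_nonneg _)
  · rw [integral_const_mul]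
    exact mul_le_mul_of_nonneg_left (D.bK s) D.Cb0

lemma iA (D : FPData T γ M Cb K Cw Ψ B w) (k : EuclideanSpace ℝ (Fin d)) (t : ℝ) :
    IntervalIntegrable (fun s => fpA Ψ B w s k) volume 0 t := by
  refine (intervalIntegrable_const (c := fpl k * (M * K) + ∑ j, |fpk k j| * (Cb * K))).mono_fun
    ((D.mA).comp (measurable_prodMk_right (y := k))).aestronglyMeasurable
    (Eventually.of_forall fun s => ?_)
  refine le_trans ?_ (le_abs_self _)
  simp only [Real.norm_eq_abs]
  unfold fpA
  refine (abs_add_le _ _).trans (add_le_add ?_ ((Finset.abs_sum_le_sum_abs _ _).trans (Finset.sum_le_sum fun j _ => ?_)))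
  · rw [abs_mul, abs_neg, abs_of_nonneg (fpl_nn k)]
    exact mul_le_mul_of_nonneg_left (D.bΨ _ _ _) (fpl_nn k)
  · rw [abs_mul]
    exact mul_le_mul_of_nonneg_left (D.bB _ _ _ _) (abs_nonneg _)

lemma iD (D : FPData T γ M Cb K Cw Ψ B w) (k : EuclideanSpace ℝ (Fin d)) (t : ℝ) :
    IntervalIntegrable (fun s => fpD Ψ B w s k) volume 0 t := by
  refine (intervalIntegrable_const (c := fpl k * (M * K) + ∑ j, |fpk k j| * (Cb * K))).mono_fun
    ((D.mD).comp (measurable_prodMk_right (y := k))).aestronglyMeasurable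
    (Eventually.of_forall fun s => ?_)
  refine le_trans ?_ (le_abs_self _)
  simp only [Real.norm_eq_abs]
  unfold fpD
  refine (abs_sub _ _).trans (add_le_add ?_ ((Finset.abs_sum_le_sum_abs _ _).trans (Finset.sum_le_sum fun j _ => ?_)))
  · rw [abs_mul, abs_neg, abs_of_nonneg (fpl_nn k)]
    exact mul_le_mul_of_nonneg_left (D.bΨ _ _ _) (fpl_nn k)
  · rw [abs_mul]
    exact mul_le_mul_of_nonneg_left (D.bB _ _ _ _) (abs_nonneg _)

lemma energy_pt (D : FPData T γ M Cb K Cw Ψ B w) (k : EuclideanSpace ℝ (Fin d)) :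
    ∀ t ∈ Icc 0 T, fprho k * (fpC (w t) k ^ 2 + fpS (w t) k ^ 2) = ∫ s in (0:ℝ)..t, fpE Ψ B w s k := by
  intro t ht
  have h1 := fp_ibp (D.iA k t) (D.iA k t)
  have h2 := fp_ibp (D.iD k t) (D.iD k t)
  rw [← D.phaseC k t ht] at h1
  rw [← D.phaseS k t ht] at h2
  have e : ∀ s ∈ uIcc 0 t, s ∈ Icc 0 T := by
    intro s hs
    rw [uIcc_of_le ht.1] at hs
    exact ⟨hs.1, hs.2.trans ht.2⟩
  have h1' : fpC (w t) k ^ 2 = ∫ s in (0:ℝ)..t, 2 * (fpC (w s) k * fpA Ψ B w s k) := by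
    rw [sq, ← h1]
    refine intervalIntegral.integral_congr fun s hs => ?_
    rw [← D.phaseC k s (e s hs)]; ring
  have h2' : fpS (w t) k ^ 2 = ∫ s in (0:ℝ)..t, 2 * (fpS (w s) k * fpD Ψ B w s k) := by
    rw [sq, ← h2]
    refine intervalIntegral.integral_congr fun s hs => ?_
    rw [← D.phaseS k s (e s hs)]; ring
  have bc : ∀ a, ∀ s, |∫ x, w s x * fpw a k x| ≤ K := fun a s => (fpC_bound (D.int s) a k).trans (D.bK s)
  have i1 : IntervalIntegrable (fun s => 2 * (fpC (w s) k * fpA Ψ B w s k)) volume 0 t := by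
    refine IntervalIntegrable.const_mul ?_ 2
    refine ((D.iA k t).const_mul K).mono_fun 
      (((fp_meas D.mw 0).mul D.mA).comp (measurable_prodMk_right (y := k))).aestronglyMeasurable
      (Eventually.of_forall fun s => ?_)
    simp only [norm_mul, Real.norm_of_nonneg D.K0]
    exact mul_le_mul_of_nonneg_right (bc _ _) (norm_nonneg _)
  have i2 : IntervalIntegrable (fun s => 2 * (fpS (w s) k * fpD Ψ B w s k)) volume 0 t := by
    refine IntervalIntegrable.const_mul ?_ 2
    refine ((D.iD k t).const_mul K).mono_fun 
      (((fp_meas D.mw _).mul D.mD).comp (measurable_prodMk_right (y := k))).aestronglyMeasurable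
      (Eventually.of_forall fun s => ?_)
    simp only [norm_mul, Real.norm_of_nonneg D.K0]
    exact mul_le_mul_of_nonneg_right (bc _ _) (norm_nonneg _)
  rw [h1', h2', ← intervalIntegral.integral_add i1 i2, ← intervalIntegral.integral_const_mul]
  refine intervalIntegral.integral_congr fun s hs => ?_
  simp only [fpE]
  ring

end FPData
end fpsec9


open MeasureTheory Filter Set
noncomputable section fpsec10
namespace FPData
variable {d : ℕ} {T γ M Cb K Cw : ℝ} {Ψ : ℝ → EuclideanSpace ℝ (Fin d) → ℝ}
    {B : ℝ → EuclideanSpace ℝ (Fin d) → EuclideanSpace ℝ (Fin d)}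
    {w : ℝ → EuclideanSpace ℝ (Fin d) → ℝ}

lemma sqint (D : FPData T γ M Cb K Cw Ψ B w) {s : ℝ} (hs : ∀ᵐ x, |w s x| ≤ Cw) :
    Integrable (fun x => w s x ^ 2) := by
  refine ((D.int s).abs.const_mul Cw).mono' ((D.mw1 s).pow_const 2).aestronglyMeasurable ?_
  filter_upwards [hs] with x hx
  rw [Real.norm_of_nonneg (sq_nonneg _), ← sq_abs, sq]
  exact mul_le_mul_of_nonneg_right hx (abs_nonneg _)

lemma sqbd (D : FPData T γ M Cb K Cw Ψ B w) (hCw : 0 ≤ Cw) {s : ℝ} (hs : ∀ᵐ x, |w s x| ≤ Cw) :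
    ∫ x, w s x ^ 2 ≤ Cw * K := by
  refine (integral_mono_ae (D.sqint hs) ((D.int s).abs.const_mul Cw) ?_).trans ?_
  · filter_upwards [hs] with x hx
    rw [← sq_abs, sq]
    exact mul_le_mul_of_nonneg_right hx (abs_nonneg _)
  · rw [integral_const_mul]
    exact mul_le_mul_of_nonneg_left (D.bK s) hCw

lemma memw (D : FPData T γ M Cb K Cw Ψ B w) {s : ℝ} (hs : ∀ᵐ x, |w s x| ≤ Cw) : MemLp (w s) 2 :=
  (memLp_two_iff_integrable_sq (D.mw1 s).aestronglyMeasurable).2 (D.sqint hs)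

lemma memΨw (D : FPData T γ M Cb K Cw Ψ B w) {s : ℝ} (hs : ∀ᵐ x, |w s x| ≤ Cw) :
    MemLp (fun x => Ψ s x * w s x) 2 := by
  refine ((D.memw hs).const_mul M).mono ((D.mΨ1 s).mul (D.mw1 s)).aestronglyMeasurable
    (Eventually.of_forall fun x => ?_)
  rw [norm_mul, norm_mul, Real.norm_of_nonneg D.M0]
  exact mul_le_mul_of_nonneg_right (D.Ψabs s x) (norm_nonneg _)

lemma memBw (D : FPData T γ M Cb K Cw Ψ B w) (j) {s : ℝ} (hs : ∀ᵐ x, |w s x| ≤ Cw) :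
    MemLp (fun x => B s x j * w s x) 2 := by
  refine ((D.memw hs).const_mul Cb).mono (D.intB j s).aestronglyMeasurable
    (Eventually.of_forall fun x => ?_)
  rw [norm_mul, norm_mul, Real.norm_of_nonneg D.Cb0]
  exact mul_le_mul_of_nonneg_right (D.Bj j s x) (norm_nonneg _)

lemma pw (D : FPData T γ M Cb K Cw Ψ B w) {s : ℝ} (hs : ∀ᵐ x, |w s x| ≤ Cw) :
    Integrable (fun k => fpC (w s) k ^ 2 + fpS (w s) k ^ 2) ∧
    ∫ k, (fpC (w s) k ^ 2 + fpS (w s) k ^ 2) = ∫ x, w s x ^ 2 := by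
  simpa only [sq] using fp_planch _ _ (D.int s) (D.memw hs) (D.int s) (D.memw hs)

/-- the sum of squares term -/
lemma pG (D : FPData T γ M Cb K Cw Ψ B w) {s : ℝ} (hs : ∀ᵐ x, |w s x| ≤ Cw) :
    Integrable (fun k => fpC (fun x => Ψ s x * w s x) k ^ 2 + fpS (fun x => Ψ s x * w s x) k ^ 2 +
      ∑ j, (fpC (fun x => B s x j * w s x) k ^ 2 + fpS (fun x => B s x j * w s x) k ^ 2)) ∧
    ∫ k, (fpC (fun x => Ψ s x * w s x) k ^ 2 + fpS (fun x => Ψ s x * w s x) k ^ 2 +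
      ∑ j, (fpC (fun x => B s x j * w s x) k ^ 2 + fpS (fun x => B s x j * w s x) k ^ 2)) ≤
      (M ^ 2 + d * Cb ^ 2) * ∫ x, w s x ^ 2 := by
  have h1 := fp_planch _ _ (D.intΨ s) (D.memΨw hs) (D.intΨ s) (D.memΨw hs)
  have h2 := fun j => fp_planch _ _ (D.intB j s) (D.memBw j hs) (D.intB j s) (D.memBw j hs)
  simp only [← sq] at h1 h2
  have i2 := integrable_finsetSum (s := Finset.univ) (f := fun j k => fpC (fun x => B s x j * w s x) k ^ 2 + fpS (fun x => B s x j * w s x) k ^ 2) (fun j _ => (h2 j).1)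
  refine ⟨h1.1.add i2, ?_⟩
  rw [integral_add h1.1 i2, integral_finsetSum _ (fun j _ => (h2 j).1), h1.2]
  simp only [(h2 _).2]
  have b1 : ∫ x, (Ψ s x * w s x) ^ 2 ≤ M ^ 2 * ∫ x, w s x ^ 2 := by
    rw [← integral_const_mul]
    refine integral_mono (D.memΨw hs).integrable_sq ((D.sqint hs).const_mul _) fun x => ?_
    simp only [mul_pow]
    refine mul_le_mul_of_nonneg_right ?_ (sq_nonneg _)
    rw [← sq_abs]
    exact pow_le_pow_left₀ (abs_nonneg _) (D.Ψabs s x) 2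
  have b2 : ∀ j ∈ Finset.univ, ∫ x, (B s x j * w s x) ^ 2 ≤ Cb ^ 2 * ∫ x, w s x ^ 2 := by
    intro j _
    rw [← integral_const_mul]
    refine integral_mono (D.memBw j hs).integrable_sq ((D.sqint hs).const_mul _) fun x => ?_
    simp only [mul_pow]
    refine mul_le_mul_of_nonneg_right ?_ (sq_nonneg _)
    rw [← sq_abs]
    exact pow_le_pow_left₀ (abs_nonneg _) (D.Bj j s x) 2
  have b3 := Finset.sum_le_sum b2
  simp only [Finset.sum_const, Finset.card_univ, Fintype.card_fin, nsmul_eq_mul] at b3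
  linarith

lemma Eint (D : FPData T γ M Cb K Cw Ψ B w) (hCw : 0 ≤ Cw) {s : ℝ} (hs : ∀ᵐ x, |w s x| ≤ Cw) :
    Integrable (fpE Ψ B w s) ∧
      ∫ k, ‖fpE Ψ B w s k‖ ≤ (d + 3 + 3 * (M ^ 2 + d * Cb ^ 2)) * (Cw * K) := by
  have h1 := D.pw hs
  have h2 := D.pG hs
  have hb := fun k => fp_abs (fprho k) (fpl k) (fpC (w s) k) (fpS (w s) k) (fpC (fun x => Ψ s x * w s x) k)
    (fpS (fun x => Ψ s x * w s x) k) (fun j => fpC (fun x => B s x j * w s x) k)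
    (fun j => fpS (fun x => B s x j * w s x) k) (fpk k) (fprho_mul k) (fprho_pos k) (fpl_nn k) (fpk_sq k)
  have hi := (h1.1.const_mul (d + 3 : ℝ)).add (h2.1.const_mul 3)
  have hE : Integrable (fpE Ψ B w s) := hi.mono' (D.mE.comp (measurable_prodMk_left (x := s))).aestronglyMeasurable
      (Eventually.of_forall hb)
  refine ⟨hE, (integral_mono hE.norm hi hb).trans ?_⟩
  simp only [Pi.add_apply]
  rw [integral_add (h1.1.const_mul (d + 3 : ℝ)) (h2.1.const_mul 3), integral_const_mul, integral_const_mul, h1.2]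
  have h3 := h2.2
  have h4 := D.sqbd hCw hs
  have h5 : (0:ℝ) ≤ d + 3 + 3 * (M ^ 2 + d * Cb ^ 2) := by positivity
  have h6 := mul_le_mul_of_nonneg_left h4 h5
  linarith

lemma rhoint (D : FPData T γ M Cb K Cw Ψ B w) {s : ℝ} (hs : ∀ᵐ x, |w s x| ≤ Cw) :
    Integrable (fun k => fprho k * (fpC (w s) k ^ 2 + fpS (w s) k ^ 2)) := by
  refine (D.pw hs).1.mono (fprho_cont.aestronglyMeasurable.mul (D.pw hs).1.aestronglyMeasurable) 
    (Eventually.of_forall fun k => ?_)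
  rw [norm_mul, Real.norm_of_nonneg (fprho_pos k).le]
  refine mul_le_of_le_one_left (norm_nonneg _) ?_
  nlinarith [fprho_pos k, fpl_nn k, fprho_mul k]

lemma Eineq (D : FPData T γ M Cb K Cw Ψ B w) (hCw : 0 ≤ Cw) {ε : ℝ} (hε : 0 < ε)
    (hε2 : ε * (M ^ 2 + d * Cb ^ 2) ≤ 2 * γ) {s : ℝ} (hs : ∀ᵐ x, |w s x| ≤ Cw) :
    ∫ k, fpE Ψ B w s k ≤ ((d + 1) / ε) * ∫ k, fprho k * (fpC (w s) k ^ 2 + fpS (w s) k ^ 2) := by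
  have h2 := D.pG hs
  have h3 := fp_planch _ _ (D.int s) (D.memw hs) (D.intΨ s) (D.memΨw hs)
  have h4 := D.rhoint hs
  have hb := fun k => fp_ineq ε (fprho k) (fpl k) (fpC (w s) k) (fpS (w s) k) (fpC (fun x => Ψ s x * w s x) k)
    (fpS (fun x => Ψ s x * w s x) k) (fun j => fpC (fun x => B s x j * w s x) k)
    (fun j => fpS (fun x => B s x j * w s x) k) (fpk k) hε (fprho_mul k) (fprho_pos k) (fpl_nn k) (fpk_sq k)
  have i1 := h3.1.const_mul (-2)
  have i2 := h4.const_mul ((d + 1) / ε)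
  have i3 := h2.1.const_mul ε
  have hi := (i1.add i2).add i3
  refine (integral_mono (D.Eint hCw hs).1 hi hb).trans ?_
  rw [integral_add' (i1.add i2) i3, integral_add' i1 i2, integral_const_mul, integral_const_mul, integral_const_mul, h3.2]
  have b1 : γ * ∫ x, w s x ^ 2 ≤ ∫ x, w s x * (Ψ s x * w s x) := by
    rw [← integral_const_mul]
    refine integral_mono ((D.sqint hs).const_mul _) ((D.memw hs).integrable_mul (D.memΨw hs)) fun x => ?_
    simp only [Pi.mul_apply]
    nlinarith [D.Ψl s x, sq_nonneg (w s x)]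
  have b2 : 0 ≤ ∫ x, w s x ^ 2 := integral_nonneg fun x => sq_nonneg _
  have b3 := mul_le_mul_of_nonneg_left h2.2 hε.le
  have b4 := mul_le_mul_of_nonneg_right hε2 b2
  linarith

theorem zero (D : FPData T γ M Cb K Cw Ψ B w) : ∀ t ∈ Icc 0 T, ∀ᵐ x, w t x = 0 := by
  -- positivity of Cw may be assumed
  have hT := D.hT
  have hgood : ∀ᵐ s ∂(volume.restrict (Ioc 0 T)), ∀ᵐ x, |w s x| ≤ Cw := by
    rw [← restrict_Ioo_eq_restrict_Ioc]; exact D.bdd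
  have hCw : 0 ≤ Cw := by
    have : (volume.restrict (Ioc 0 T)) ≠ 0 := by simp [hT]
    have : NeBot (ae (volume.restrict (Ioc 0 T))) := ae_neBot.2 this
    obtain ⟨s, hs⟩ := hgood.exists
    obtain ⟨x, hx⟩ := hs.exists
    exact (abs_nonneg _).trans hx
  have hEi : Integrable (fun p : ℝ × EuclideanSpace ℝ (Fin d) => fpE Ψ B w p.1 p.2)
      ((volume.restrict (Ioc 0 T)).prod volume) := by
    rw [integrable_prod_iff D.mE.aestronglyMeasurable]
    constructor
    · filter_upwards [hgood] with s hs using (D.Eint hCw hs).1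
    · refine Integrable.mono' (integrable_const ((d + 3 + 3 * (M ^ 2 + d * Cb ^ 2)) * (Cw * K))) ?_ ?_
      · exact (D.mE.norm.stronglyMeasurable.integral_prod_right').aestronglyMeasurable
      · filter_upwards [hgood] with s hs
        rw [Real.norm_of_nonneg (integral_nonneg fun _ => norm_nonneg _)]
        exact (D.Eint hCw hs).2
  have hEt : ∀ t ∈ Icc 0 T, Integrable (fun p : ℝ × EuclideanSpace ℝ (Fin d) => fpE Ψ B w p.1 p.2)
      ((volume.restrict (Ioc 0 t)).prod volume) := by
    intro t ht
    refine hEi.mono_measure ?_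
    exact Measure.prod_mono (Measure.restrict_mono (Ioc_subset_Ioc_right ht.2) le_rfl) le_rfl
  let N : ℝ → ℝ := fun t => ∫ k, fprho k * (fpC (w t) k ^ 2 + fpS (w t) k ^ 2)
  have hpt : ∀ t ∈ Icc 0 T, ∀ k, fprho k * (fpC (w t) k ^ 2 + fpS (w t) k ^ 2) =
      ∫ s in Ioc 0 t, fpE Ψ B w s k := by
    intro t ht k
    rw [D.energy_pt k t ht, intervalIntegral.integral_of_le ht.1]
  have hN : ∀ t ∈ Icc 0 T, N t = ∫ s in (0:ℝ)..t, ∫ k, fpE Ψ B w s k := by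
    intro t ht
    simp only [N, hpt t ht]
    rw [intervalIntegral.integral_of_le ht.1]
    exact (integral_integral_swap (hEt t ht)).symm
  obtain ⟨ε, hε, hε2⟩ : ∃ ε : ℝ, 0 < ε ∧ ε * (M ^ 2 + d * Cb ^ 2) ≤ 2 * γ := by
    have h := D.hγ
    have h0 : 0 ≤ M ^ 2 + d * Cb ^ 2 := by positivity
    refine ⟨γ / (M ^ 2 + d * Cb ^ 2 + 1), by positivity, ?_⟩
    rw [div_mul_eq_mul_div, div_le_iff₀ (by positivity)]
    nlinarith
  have hN0 : ∀ t, 0 ≤ N t := fun t => integral_nonneg fun k =>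
    mul_nonneg (fprho_pos k).le (by positivity)
  have hz := fp_gronwall (C := (d + 1) / ε) (by positivity) (D := fun s => ∫ k, fpE Ψ B w s k)
    hEi.integral_prod_left hN hN0 (by
      filter_upwards [hgood] with s hs using D.Eineq hCw hε hε2 hs)
  intro t ht
  have hi : Integrable (fun k => fprho k * (fpC (w t) k ^ 2 + fpS (w t) k ^ 2)) := by
    simp only [hpt t ht]
    exact (hEt t ht).integral_prod_right
  have h0 := (integral_eq_zero_iff_of_nonneg (fun k => mul_nonneg (fprho_pos k).le (by positivity)) hi).1 (hz t ht)
  have := fp_inj (fun x => (w t x : ℂ)) (D.int t).ofReal (by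
    filter_upwards [h0] with k hk
    have h1 := (mul_eq_zero.1 hk).resolve_left (fprho_pos k).ne'
    have h2 : fpC (w t) k = 0 := by nlinarith [sq_nonneg (fpC (w t) k), sq_nonneg (fpS (w t) k)]
    have h3 : fpS (w t) k = 0 := by nlinarith [sq_nonneg (fpC (w t) k), sq_nonneg (fpS (w t) k)]
    rw [fp_four (w t) (D.int t), h2, h3]; rfl)
  filter_upwards [this] with x hx
  exact_mod_cast hx
end FPData
end fpsec10


open MeasureTheory Filter Set
noncomputable section fpsec11
section
variable {d : ℕ}

lemma fp_part_fderiv {F : ℝ × EuclideanSpace ℝ (Fin d) → ℝ} {t x} (hF : DifferentiableAt ℝ F (t, x)) :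
    fderiv ℝ (fun y => F (t, y)) x = (fderiv ℝ F (t, x)).comp (ContinuousLinearMap.inr ℝ ℝ (EuclideanSpace ℝ (Fin d))) := by
  have h : HasFDerivAt (fun y : EuclideanSpace ℝ (Fin d) => (t, y)) (ContinuousLinearMap.inr ℝ ℝ (EuclideanSpace ℝ (Fin d))) x :=
    hasFDerivAt_prodMk_right t x
  exact (hF.hasFDerivAt.comp x h).fderiv

lemma fp_test (φ : ℝ → EuclideanSpace ℝ (Fin d) → ℝ)
    (h1 : ContDiff ℝ (⊤ : ℕ∞) (Function.uncurry φ)) (h2 : HasCompactSupport (Function.uncurry φ)) :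
    Continuous (fun p : ℝ × EuclideanSpace ℝ (Fin d) => deriv (fun s => φ s p.2) p.1) ∧
    Continuous (fun p : ℝ × EuclideanSpace ℝ (Fin d) => lap (φ p.1) p.2) ∧
    Continuous (fun p : ℝ × EuclideanSpace ℝ (Fin d) => fderiv ℝ (φ p.1) p.2) ∧
    ∃ C, 0 ≤ C ∧ ∀ t x, |deriv (fun s => φ s x) t| ≤ C ∧ |lap (φ t) x| ≤ C ∧ ‖fderiv ℝ (φ t) x‖ ≤ C := by
  have hd : Differentiable ℝ (Function.uncurry φ) := h1.differentiable (by simp)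
  have e1 : ∀ p : ℝ × EuclideanSpace ℝ (Fin d), deriv (fun s => φ s p.2) p.1 =
      fderiv ℝ (Function.uncurry φ) p (1, 0) := by
    rintro ⟨t, x⟩
    have h : HasDerivAt (fun s : ℝ => (s, x)) ((1 : ℝ), (0 : EuclideanSpace ℝ (Fin d))) t :=
      (hasDerivAt_id t).prodMk (hasDerivAt_const t x)
    exact ((hd (t, x)).hasFDerivAt.comp_hasDerivAt t h).deriv
  have e2 : ∀ p : ℝ × EuclideanSpace ℝ (Fin d), fderiv ℝ (φ p.1) p.2 =
      (fderiv ℝ (Function.uncurry φ) p).comp (ContinuousLinearMap.inr ℝ ℝ (EuclideanSpace ℝ (Fin d))) := by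
    rintro ⟨t, x⟩
    exact fp_part_fderiv (hd (t, x))
  let G : Fin d → ℝ × EuclideanSpace ℝ (Fin d) → ℝ := fun i p =>
    fderiv ℝ (Function.uncurry φ) p (0, EuclideanSpace.single i 1)
  have hG : ∀ i, ContDiff ℝ (⊤ : ℕ∞) (G i) := fun i =>
    (h1.fderiv_right (m := (⊤ : ℕ∞)) (by exact_mod_cast le_rfl)).clm_apply contDiff_const
  have hGc : ∀ i, HasCompactSupport (G i) := fun i =>
    (h2.fderiv ℝ).comp_left (g := fun L : (ℝ × EuclideanSpace ℝ (Fin d)) →L[ℝ] ℝ => L (0, EuclideanSpace.single i 1)) (by simp)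
  have e3 : ∀ p : ℝ × EuclideanSpace ℝ (Fin d), lap (φ p.1) p.2 =
      ∑ i, fderiv ℝ (G i) p (0, EuclideanSpace.single i 1) := by
    rintro ⟨t, x⟩
    unfold lap
    refine Finset.sum_congr rfl fun i _ => ?_
    have : (fun y => fderiv ℝ (φ t) y (EuclideanSpace.single i 1)) = fun y => G i (t, y) := by
      ext y
      rw [e2 (t, y)]
      simp [G]
    simp only [this]
    rw [fp_part_fderiv ((hG i).differentiable (by simp) (t, x))]
    simp
  have hc := h1.continuous_fderiv (by simp)
  have c1 : Continuous (fun p : ℝ × EuclideanSpace ℝ (Fin d) => deriv (fun s => φ s p.2) p.1) := by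
    simp only [e1]; exact hc.clm_apply continuous_const
  have c2 : Continuous (fun p : ℝ × EuclideanSpace ℝ (Fin d) => lap (φ p.1) p.2) := by
    simp only [e3]
    exact continuous_finsetSum _ fun i _ => ((hG i).continuous_fderiv (by simp)).clm_apply continuous_const
  have c3 : Continuous (fun p : ℝ × EuclideanSpace ℝ (Fin d) => fderiv ℝ (φ p.1) p.2) := by
    simp only [e2]; exact hc.clm_comp continuous_const
  have k1 : HasCompactSupport (fun p : ℝ × EuclideanSpace ℝ (Fin d) => deriv (fun s => φ s p.2) p.1) := by
    simp only [e1]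
    exact (h2.fderiv ℝ).comp_left (g := fun L : (ℝ × EuclideanSpace ℝ (Fin d)) →L[ℝ] ℝ => L (1, 0)) (by simp)
  have k3 : HasCompactSupport (fun p : ℝ × EuclideanSpace ℝ (Fin d) => fderiv ℝ (φ p.1) p.2) := by
    simp only [e2]
    exact (h2.fderiv ℝ).comp_left (g := fun L : (ℝ × EuclideanSpace ℝ (Fin d)) →L[ℝ] ℝ => L.comp (ContinuousLinearMap.inr ℝ ℝ (EuclideanSpace ℝ (Fin d)))) (by simp)
  obtain ⟨C1, hC1⟩ := k1.exists_bound_of_continuous c1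
  have k2 : ∀ i, ∃ C, ∀ p, ‖fderiv ℝ (G i) p (0, EuclideanSpace.single i 1)‖ ≤ C := fun i =>
    HasCompactSupport.exists_bound_of_continuous
      (((hGc i).fderiv ℝ).comp_left
        (g := fun L : (ℝ × EuclideanSpace ℝ (Fin d)) →L[ℝ] ℝ => L (0, EuclideanSpace.single i 1)) (by simp))
      (((hG i).continuous_fderiv (by simp)).clm_apply continuous_const)
  choose C2i hC2i using k2
  obtain ⟨C2, hC2⟩ : ∃ C2, ∀ p : ℝ × EuclideanSpace ℝ (Fin d), ‖lap (φ p.1) p.2‖ ≤ C2 :=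
    ⟨∑ i, C2i i, fun p => by
      rw [e3]
      exact (norm_sum_le _ _).trans (Finset.sum_le_sum fun i _ => hC2i i p)⟩
  obtain ⟨C3, hC3⟩ := k3.exists_bound_of_continuous c3
  have n1 := (norm_nonneg _).trans (hC1 0)
  have n2 := (norm_nonneg _).trans (hC2 0)
  have n3 := (norm_nonneg _).trans (hC3 0)
  refine ⟨c1, c2, c3, C1 + C2 + C3, by linarith, fun t x => ⟨?_, ?_, ?_⟩⟩
  · exact (hC1 (t, x)).trans (by linarith)
  · exact (hC2 (t, x)).trans (by linarith)
  · exact (hC3 (t, x)).trans (by linarith)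

lemma fp_weak_int {T M Cb K : ℝ} {Ψ : ℝ → EuclideanSpace ℝ (Fin d) → ℝ}
    {B : ℝ → EuclideanSpace ℝ (Fin d) → EuclideanSpace ℝ (Fin d)}
    {V : ℝ → EuclideanSpace ℝ (Fin d) → ℝ}
    (mΨ : Measurable (Function.uncurry Ψ)) (mB : Measurable (Function.uncurry B))
    (mV : Measurable (Function.uncurry V)) (hΨ : ∀ t x, |Ψ t x| ≤ M) (hB : ∀ t x, ‖B t x‖ ≤ Cb)
    (hV : ∀ t ∈ Icc 0 T, Integrable (V t)) (hK : ∀ t ∈ Icc 0 T, ∫ x, |V t x| ≤ K)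
    (φ : ℝ → EuclideanSpace ℝ (Fin d) → ℝ)
    (h1 : ContDiff ℝ (⊤ : ℕ∞) (Function.uncurry φ)) (h2 : HasCompactSupport (Function.uncurry φ)) :
    (∀ t ∈ Icc 0 T, Integrable (fun x => V t x * deriv (fun s => φ s x) t
        + Ψ t x * V t x * lap (φ t) x + V t x * fderiv ℝ (φ t) x (B t x))) ∧
    IntegrableOn (fun t => ∫ x, (V t x * deriv (fun s => φ s x) t
        + Ψ t x * V t x * lap (φ t) x + V t x * fderiv ℝ (φ t) x (B t x))) (Ioo 0 T) := by
  obtain ⟨c1, c2, c3, C, hC, hb⟩ := fp_test φ h1 h2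
  have hM : 0 ≤ M := (abs_nonneg _).trans (hΨ 0 0)
  have hCb : 0 ≤ Cb := (norm_nonneg _).trans (hB 0 0)
  have mf : Measurable (fun p : ℝ × EuclideanSpace ℝ (Fin d) => fderiv ℝ (φ p.1) p.2 (B p.1 p.2)) :=
    (isBoundedBilinearMap_apply.continuous.comp_stronglyMeasurable
      (c3.stronglyMeasurable.prodMk mB.stronglyMeasurable)).measurable
  have m : Measurable (fun p : ℝ × EuclideanSpace ℝ (Fin d) => V p.1 p.2 * deriv (fun s => φ s p.2) p.1
        + Ψ p.1 p.2 * V p.1 p.2 * lap (φ p.1) p.2 + V p.1 p.2 * fderiv ℝ (φ p.1) p.2 (B p.1 p.2)) :=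
    ((mV.mul c1.measurable).add ((mΨ.mul mV).mul c2.measurable)).add (mV.mul mf)
  have bd : ∀ t x, ‖V t x * deriv (fun s => φ s x) t
        + Ψ t x * V t x * lap (φ t) x + V t x * fderiv ℝ (φ t) x (B t x)‖ ≤ (C + M * C + C * Cb) * |V t x| := by
    intro t x
    obtain ⟨b1, b2, b3⟩ := hb t x
    rw [Real.norm_eq_abs]
    refine (abs_add_le _ _).trans ((add_le_add_left (abs_add_le _ _) _).trans ?_)
    rw [abs_mul, abs_mul, abs_mul, abs_mul]
    have a1 : |Ψ t x| * |lap (φ t) x| ≤ M * C := mul_le_mul (hΨ t x) b2 (abs_nonneg _) hM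
    have a2 : |fderiv ℝ (φ t) x (B t x)| ≤ C * Cb :=
      ((fderiv ℝ (φ t) x).le_opNorm _).trans (mul_le_mul b3 (hB t x) (norm_nonneg _) hC)
    nlinarith [abs_nonneg (V t x)]
  refine ⟨fun t ht => ?_, ?_⟩
  · exact ((hV t ht).abs.const_mul (C + M * C + C * Cb)).mono'
      (m.comp (measurable_prodMk_left (x := t))).aestronglyMeasurable (Eventually.of_forall (bd t))
  · refine Measure.integrableOn_of_bounded (M := (C + M * C + C * Cb) * K) (by simp)
      (m.stronglyMeasurable.integral_prod_right').aestronglyMeasurable ?_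
    filter_upwards [ae_restrict_mem measurableSet_Ioo] with t ht
    have ht' := Ioo_subset_Icc_self ht
    refine (norm_integral_le_of_norm_le ((hV t ht').abs.const_mul _) (Eventually.of_forall (bd t))).trans ?_
    rw [integral_const_mul]
    exact mul_le_mul_of_nonneg_left (hK t ht') (by positivity)

lemma fp_Phi {β : ℝ → ℝ} {γ0 : ℝ} (hβ : HypBeta β γ0) {Φ : ℝ → ℝ} (hΦ0 : Φ 0 = deriv β 0)
    (hΦ : ∀ r : ℝ, r ≠ 0 → Φ r = β r / r) : Continuous Φ ∧ ∀ r, γ0 ≤ Φ r := by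
  obtain ⟨h0, hc, hγ, hm⟩ := hβ
  have e : Φ = dslope β 0 := by
    ext r
    by_cases hr : r = 0
    · subst hr; simp [hΦ0]
    · rw [hΦ r hr, dslope_of_ne _ hr, slope_def_field, h0]; simp
  have hcont : Continuous Φ := by
    rw [e, ← continuousOn_univ, continuousOn_dslope univ_mem]
    exact ⟨hc.continuous.continuousOn, hc.differentiable (by simp) 0⟩
  have hne : ∀ r, r ≠ 0 → γ0 ≤ Φ r := by
    intro r hr
    rw [hΦ r hr]
    have := hm r 0
    rw [h0, sub_zero, sub_zero] at this
    have h2 : 0 < r ^ 2 := by positivity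
    rw [show β r / r = β r * r / r ^ 2 by field_simp, le_div_iff₀ h2]
    exact this
  refine ⟨hcont, fun r => ?_⟩
  have hcl : IsClosed {r | γ0 ≤ Φ r} := isClosed_le continuous_const hcont
  have hd : Dense ({0}ᶜ : Set ℝ) := dense_compl_singleton 0
  exact hcl.closure_subset_iff.2 (fun r hr => hne r hr) (hd r)

lemma fp_L1 {T : ℝ} {v : ℝ → EuclideanSpace ℝ (Fin d) → ℝ} (hi : ∀ t ∈ Icc 0 T, Integrable (v t))
    (hc : ∀ s ∈ Icc (0 : ℝ) T,
      Tendsto (fun t => ∫ x, |v t x - v s x|) (nhdsWithin s (Icc 0 T)) (nhds 0)) :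
    ∃ K, ∀ t ∈ Icc 0 T, ∫ x, |v t x| ≤ K := by
  have hcont : ContinuousOn (fun t => ∫ x, |v t x|) (Icc 0 T) := by
    intro s hs
    rw [ContinuousWithinAt, tendsto_iff_dist_tendsto_zero]
    refine squeeze_zero' (Eventually.of_forall fun _ => dist_nonneg) ?_ (hc s hs)
    filter_upwards [self_mem_nhdsWithin] with t ht
    rw [Real.dist_eq, ← integral_sub (hi t ht).abs (hi s hs).abs]
    refine (abs_integral_le_integral_abs).trans ?_
    refine integral_mono ((hi t ht).abs.sub (hi s hs).abs).abs ((hi t ht).sub (hi s hs)).abs fun x => ?_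
    exact abs_abs_sub_abs_le_abs_sub _ _
  obtain ⟨K, hK⟩ := isCompact_Icc.exists_bound_of_continuousOn hcont
  exact ⟨K, fun t ht => (le_abs_self _).trans (hK t ht)⟩
end
end fpsec11


/-- Theorem 3.1, linearized uniqueness: under hypotheses (i)–(ii),
given a bounded measurable `u` on `(0,T) × ℝ^d`, with `Ψ(t,x) = Φ(u(t,x))`
(`Φ(r) = β(r)/r`, `Φ(0) = β'(0)`) and `B(t,x) = b(x,u(t,x))`, the linearized
Fokker–Planck equation `∂_t v − Δ(Ψ v) + div(B v) = 0`, `v(0) = v0`, has at most one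
distributional solution which is continuous from `[0,T]` to `L¹` and essentially
bounded on `(0,T) × ℝ^d`. -/
theorem linearized_fokker_planck_uniqueness
    {d : ℕ} (T : ℝ) (hT : 0 < T)
    (β : ℝ → ℝ) (γ0 : ℝ) (hβ : HypBeta β γ0)
    (b : EuclideanSpace ℝ (Fin d) → ℝ → EuclideanSpace ℝ (Fin d)) (hb : HypB b)
    (u : ℝ → EuclideanSpace ℝ (Fin d) → ℝ)
    (hu_meas : Measurable (Function.uncurry u))
    (hu_bdd : ∃ C, ∀ t ∈ Ioo (0 : ℝ) T, ∀ᵐ x, |u t x| ≤ C)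
    (Φ : ℝ → ℝ) (hΦ0 : Φ 0 = deriv β 0) (hΦ : ∀ r : ℝ, r ≠ 0 → Φ r = β r / r)
    (v0 : EuclideanSpace ℝ (Fin d) → ℝ)
    (hv0L1 : Integrable v0) (hv0Linf : ∃ C, ∀ᵐ x, |v0 x| ≤ C)
    (v₁ v₂ : ℝ → EuclideanSpace ℝ (Fin d) → ℝ)
    (hsol₁ : IsLinDistSol T (fun t x => Φ (u t x)) (fun t x => b x (u t x)) v0 v₁)
    (hsol₂ : IsLinDistSol T (fun t x => Φ (u t x)) (fun t x => b x (u t x)) v0 v₂)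
    (hcont₁ : ∀ s ∈ Icc (0 : ℝ) T,
      Tendsto (fun t => ∫ x, |v₁ t x - v₁ s x|) (nhdsWithin s (Icc 0 T)) (nhds 0))
    (hcont₂ : ∀ s ∈ Icc (0 : ℝ) T,
      Tendsto (fun t => ∫ x, |v₂ t x - v₂ s x|) (nhdsWithin s (Icc 0 T)) (nhds 0))
    (hbdd₁ : ∃ C, ∀ᵐ p ∂((volume.restrict (Ioo 0 T)).prod
      (volume : Measure (EuclideanSpace ℝ (Fin d)))), |v₁ p.1 p.2| ≤ C)
    (hbdd₂ : ∃ C, ∀ᵐ p ∂((volume.restrict (Ioo 0 T)).prod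
      (volume : Measure (EuclideanSpace ℝ (Fin d)))), |v₂ p.1 p.2| ≤ C) :
    ∀ t ∈ Icc (0 : ℝ) T, v₁ t =ᵐ[volume] v₂ t := by
  obtain ⟨hΦc, hΦl⟩ := fp_Phi hβ hΦ0 hΦ
  obtain ⟨Cu, hCu⟩ := hu_bdd
  obtain ⟨hbC1, ⟨Cb, hCb⟩, -⟩ := hb
  obtain ⟨i1, n1, f1, z1⟩ := hsol₁
  obtain ⟨i2, n2, f2, z2⟩ := hsol₂
  obtain ⟨V1, mV1, e1⟩ := fp_rep hT v₁ i1 (fun ψ h h' s hs => n1 ψ h h' s hs)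
  obtain ⟨V2, mV2, e2⟩ := fp_rep hT v₂ i2 (fun ψ h h' s hs => n2 ψ h h' s hs)
  obtain ⟨K1, hK1⟩ := fp_L1 i1 hcont₁
  obtain ⟨K2, hK2⟩ := fp_L1 i2 hcont₂
  obtain ⟨C1, hC1⟩ := hbdd₁
  obtain ⟨C2, hC2⟩ := hbdd₂
  have iV1 : ∀ t ∈ Icc 0 T, Integrable (V1 t) := fun t ht => (i1 t ht).congr (e1 t ht).symm
  have iV2 : ∀ t ∈ Icc 0 T, Integrable (V2 t) := fun t ht => (i2 t ht).congr (e2 t ht).symm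
  have kV1 : ∀ t ∈ Icc 0 T, ∫ x, |V1 t x| ≤ K1 := fun t ht => by
    refine le_of_eq_of_le (integral_congr_ae ?_) (hK1 t ht)
    filter_upwards [e1 t ht] with x hx; rw [hx]
  have kV2 : ∀ t ∈ Icc 0 T, ∫ x, |V2 t x| ≤ K2 := fun t ht => by
    refine le_of_eq_of_le (integral_congr_ae ?_) (hK2 t ht)
    filter_upwards [e2 t ht] with x hx; rw [hx]
  -- truncated coefficients
  let R : ℝ → ℝ := fun r => max (-|Cu|) (min |Cu| r)
  have hRc : Continuous R := by fun_prop
  have hRm : ∀ r, R r ∈ Icc (-|Cu|) |Cu| := fun r =>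
    ⟨le_max_left _ _, max_le (by have := abs_nonneg Cu; linarith) (min_le_left _ _)⟩
  have hRe : ∀ r, |r| ≤ Cu → R r = r := by
    intro r hr
    have h := abs_le.1 (hr.trans (le_abs_self Cu))
    simp only [R]
    rw [min_eq_right h.2, max_eq_right h.1]
  obtain ⟨M, hM⟩ := (isCompact_Icc (a := -|Cu|) (b := |Cu|)).exists_bound_of_continuousOn hΦc.continuousOn
  let Ψ : ℝ → EuclideanSpace ℝ (Fin d) → ℝ := fun t x => Φ (R (u t x))
  let B : ℝ → EuclideanSpace ℝ (Fin d) → EuclideanSpace ℝ (Fin d) := fun t x => b x (u t x)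
  have mΨ : Measurable (Function.uncurry Ψ) := (hΦc.comp hRc).measurable.comp hu_meas
  have mB : Measurable (Function.uncurry B) :=
    hbC1.continuous.measurable.comp (measurable_snd.prodMk hu_meas)
  have hΨ : ∀ t x, |Ψ t x| ≤ M := fun t x => hM _ (hRm _)
  have hB : ∀ t x, ‖B t x‖ ≤ Cb := fun t x => hCb _ _
  have eΨ : ∀ t ∈ Ioo 0 T, ∀ᵐ x, Ψ t x = Φ (u t x) := fun t ht => by
    filter_upwards [hCu t ht] with x hx
    simp only [Ψ, hRe _ hx]
  let w : ℝ → EuclideanSpace ℝ (Fin d) → ℝ := fun t x => if t ∈ Icc 0 T then V1 t x - V2 t x else 0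
  have hw : ∀ t ∈ Icc 0 T, ∀ x, w t x = V1 t x - V2 t x := fun t ht x => if_pos ht
  have hw' : ∀ t ∉ Icc 0 T, ∀ x, w t x = 0 := fun t ht x => if_neg ht
  have ip : ∀ (v : ℝ → EuclideanSpace ℝ (Fin d) → ℝ), (∀ t ∈ Icc 0 T, Integrable (v t)) → 
      ∀ ψ : EuclideanSpace ℝ (Fin d) → ℝ, Continuous ψ → (∃ C, ∀ x, |ψ x| ≤ C) → ∀ t ∈ Icc 0 T,
      Integrable (fun x => v t x * ψ x) := by
    rintro v hv ψ hψ ⟨C, hC⟩ t ht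
    exact (hv t ht).mul_bdd (c := C) hψ.aestronglyMeasurable (Eventually.of_forall hC)
  have D : FPData T γ0 M Cb (K1 + K2) (C1 + C2) Ψ B w :=
    { hT := hT
      hγ := hβ.2.2.1
      mΨ := mΨ
      mB := mB
      mw := Measurable.ite (measurable_fst measurableSet_Icc) (mV1.sub mV2) measurable_const
      Ψl := fun t x => hΦl _
      Ψu := fun t x => (le_abs_self _).trans (hΨ t x)
      Bb := hB
      int := by
        intro t
        by_cases ht : t ∈ Icc 0 T
        · exact ((iV1 t ht).sub (iV2 t ht)).congr (Eventually.of_forall fun x => (hw t ht x).symm)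
        · exact (integrable_zero _ _ _).congr (Eventually.of_forall fun x => (hw' t ht x).symm)
      bK := by
        intro t
        by_cases ht : t ∈ Icc 0 T
        · simp only [hw t ht]
          refine (integral_mono ((iV1 t ht).sub (iV2 t ht)).abs ((iV1 t ht).abs.add (iV2 t ht).abs)
            fun x => abs_sub _ _).trans ?_
          rw [integral_add' (iV1 t ht).abs (iV2 t ht).abs]
          exact add_le_add (kV1 t ht) (kV2 t ht)
        · have h0 : (0:ℝ) ∈ Icc 0 T := ⟨le_rfl, hT.le⟩
          have a1 := (integral_nonneg fun _ => abs_nonneg _).trans (kV1 0 h0)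
          have a2 := (integral_nonneg fun _ => abs_nonneg _).trans (kV2 0 h0)
          simp only [hw' t ht, abs_zero, integral_zero]
          linarith
      cont := by
        intro ψ hψ hψb
        have h : ContinuousOn (fun t => (∫ x, v₁ t x * ψ x) - ∫ x, v₂ t x * ψ x) (Icc 0 T) :=
          ContinuousOn.sub (fun s hs => n1 ψ hψ hψb s hs) (fun s hs => n2 ψ hψ hψb s hs)
        refine h.congr fun t ht => ?_
        simp only
        rw [← integral_sub (ip v₁ i1 ψ hψ hψb t ht) (ip v₂ i2 ψ hψ hψb t ht)]
        refine integral_congr_ae ?_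
        filter_upwards [e1 t ht, e2 t ht] with x h1 h2
        rw [hw t ht, h1, h2]; ring
      bdd := by
        filter_upwards [Measure.ae_ae_of_ae_prod hC1, Measure.ae_ae_of_ae_prod hC2,
          ae_restrict_mem measurableSet_Ioo] with t a1 a2 ht
        have ht' := Ioo_subset_Icc_self ht
        filter_upwards [a1, a2, e1 t ht', e2 t ht'] with x b1 b2 b3 b4
        rw [hw t ht', b3, b4]
        exact (abs_sub _ _).trans (add_le_add b1 b2)
      init := by
        have h0 : (0:ℝ) ∈ Icc 0 T := ⟨le_rfl, hT.le⟩
        filter_upwards [z1, z2, e1 0 h0, e2 0 h0] with x a1 a2 a3 a4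
        rw [hw 0 h0, a3, a4, a1, a2, sub_self]
      weak := by
        intro φ hφ hφc hφs
        obtain ⟨p1, q1⟩ := fp_weak_int mΨ mB mV1 hΨ hB iV1 kV1 φ hφ hφc
        obtain ⟨p2, q2⟩ := fp_weak_int mΨ mB mV2 hΨ hB iV2 kV2 φ hφ hφc
        have s1 : ∫ t in Ioo 0 T, ∫ x, (V1 t x * deriv (fun s => φ s x) t
            + Ψ t x * V1 t x * lap (φ t) x + V1 t x * fderiv ℝ (φ t) x (B t x)) = 0 := by
          refine Eq.trans ?_ (f1 φ hφ hφc hφs)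
          refine setIntegral_congr_fun measurableSet_Ioo fun t ht => integral_congr_ae ?_
          filter_upwards [eΨ t ht, e1 t (Ioo_subset_Icc_self ht)] with x a1 a2
          rw [a1, a2]
        have s2 : ∫ t in Ioo 0 T, ∫ x, (V2 t x * deriv (fun s => φ s x) t
            + Ψ t x * V2 t x * lap (φ t) x + V2 t x * fderiv ℝ (φ t) x (B t x)) = 0 := by
          refine Eq.trans ?_ (f2 φ hφ hφc hφs)
          refine setIntegral_congr_fun measurableSet_Ioo fun t ht => integral_congr_ae ?_
          filter_upwards [eΨ t ht, e2 t (Ioo_subset_Icc_self ht)] with x a1 a2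
          rw [a1, a2]
        have s3 := integral_sub q1 q2
        rw [s1, s2, sub_zero] at s3
        refine Eq.trans ?_ s3
        refine setIntegral_congr_fun measurableSet_Ioo fun t ht => ?_
        have ht' := Ioo_subset_Icc_self ht
        rw [← integral_sub (p1 t ht') (p2 t ht')]
        refine integral_congr_ae (Eventually.of_forall fun x => ?_)
        simp only [hw t ht']
        ring }
  intro t ht
  filter_upwards [D.zero t ht, e1 t ht, e2 t ht] with x h1 h2 h3
  rw [hw t ht, h2, h3] at h1
  linarith

end
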